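/- arXiv:1008.4908 — 2 statements merged into one kernel-verified Lean document; each statement's English description precedes it below -/
import Mathlib

section
/- The rational group homology of Γ is: H₀(Γ; Q) ≅ Q, H₂(Γ; Q) ≅ Q^q, and H_j(Γ; Q) = 0 for every j ∉ {0, 2}. -/
/-!
The lattice `Γ` acts on the triangle complex whose vertices are the cosets of the three subgroups
`⟨σᵢ⟩`, whose edges are three copies of `Γ`, and whose triangles are the pairs of an index `j` and
an element of `Γ`. Its augmented chain complex
`0 → R[J × Γ] → R[3 × Γ] → ⨁ᵢ R[Γ / ⟨σᵢ⟩] → R → 0`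
is exact. At the vertices and edges this is the presentation of `Γ`: exactness at the edges amounts
to the existence of an affine action of `Γ` for which the `σᵢ` have prescribed fixed points. At the
triangles it reflects the contractibility of the building. Words in the powers of
`σ₁, σ₂, σ₃, σ₁, …`, up to moving one vertex of an edge path across a pair of triangles, are left
cancellative because the difference sets are planar, and the Garside element `[0, 0, 0]` is central.
The lengths of reduced words therefore define distances from a base point, and every triangle is the
unique lowest one on one of its edges with respect to the sum of the distances of its vertices.
Hence the boundary map on triangles is triangular and so injective.

Stabilizers are trivial or of order `N`, which is invertible, so the terms of the resolution of `R`
are acyclic. Dimension shifting gives `H_j = 0` for `j ≥ 3` and identifies `H₂` with the kernel of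
the map `R^(q + 1) → R³` on coinvariants, all of whose entries are the sum of the coefficients.
Finally `H₁ = Γ^ab ⊗ R` is killed by the invertible number `N`.
-/

namespace Stmt7

open Finsupp in
/-- The `n`-th differential of the (inhomogeneous) bar complex computing the homology of the
group `G` with trivial coefficients in the commutative ring `R`.  The module of `n`-chains is
the free `R`-module on `n`-tuples of elements of `G`, and on a basis element
`(g₁, …, g_{n+1})` the differential is
`(g₂,…,g_{n+1}) + ∑ᵢ (-1)ⁱ (g₁,…,gᵢgᵢ₊₁,…,g_{n+1}) + (-1)^{n+1} (g₁,…,g_n)`. -/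
noncomputable def barDiff (R : Type) [CommRing R] (G : Type*) [Group G] (n : ℕ) :
    ((Fin (n + 1) → G) →₀ R) →ₗ[R] ((Fin n → G) →₀ R) :=
  Finsupp.lift ((Fin n → G) →₀ R) R (Fin (n + 1) → G) fun c =>
    Finsupp.single (fun j : Fin n => c j.succ) (1 : R)
      + ∑ i : Fin n, Finsupp.single
          (fun j : Fin n => if (j : ℕ) < (i : ℕ) then c (Fin.castSucc j)
            else if (j : ℕ) = (i : ℕ) then c (Fin.castSucc i) * c i.succ
            else c j.succ) ((-1 : R) ^ ((i : ℕ) + 1))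
      + Finsupp.single (fun j : Fin n => c (Fin.castSucc j)) ((-1 : R) ^ (n + 1))

/-- The submodule of `k`-cycles of the bar complex of `G` (with trivial coefficients `R`). -/
noncomputable def barCycles (R : Type) [CommRing R] (G : Type*) [Group G] :
    (k : ℕ) → Submodule R ((Fin k → G) →₀ R)
  | 0 => ⊤
  | (k + 1) => LinearMap.ker (barDiff R G k)

/-- The submodule of `k`-boundaries of the bar complex of `G`. -/
noncomputable def barBoundaries (R : Type) [CommRing R] (G : Type*) [Group G] (k : ℕ) :
    Submodule R ((Fin k → G) →₀ R) :=
  LinearMap.range (barDiff R G k)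

/-- Group homology `H_k(G; R)` with trivial coefficients, defined via the bar complex as the
image of the `k`-cycles in the quotient of the `k`-chains by the `k`-boundaries
(i.e. as `Z_k / B_k`). -/
noncomputable def barHomology (R : Type) [CommRing R] (G : Type*) [Group G] (k : ℕ) :=
  ↥(Submodule.map (barBoundaries R G k).mkQ (barCycles R G k))

noncomputable instance (R : Type) [CommRing R] (G : Type*) [Group G] (k : ℕ) :
    AddCommGroup (barHomology R G k) :=
  inferInstanceAs (AddCommGroup ↥(Submodule.map (barBoundaries R G k).mkQ (barCycles R G k)))

noncomputable instance (R : Type) [CommRing R] (G : Type*) [Group G] (k : ℕ) :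
    Module R (barHomology R G k) :=
  inferInstanceAs (Module R ↥(Submodule.map (barBoundaries R G k).mkQ (barCycles R G k)))

/-- The relators of the presentation
`Γ = ⟨σ₁, σ₂, σ₃ ∣ σᵢ^N = 1 (i = 1,2,3), σ₁^{δ₁(j)} σ₂^{δ₂(j)} σ₃^{δ₃(j)} = 1 (0 ≤ j ≤ q)⟩`,
where `N = q² + q + 1` and `δ i : Fin (q+1) → ZMod N` are the three ordered difference sets
(exponentiation by `δ ∈ ZMod N` means exponentiation by the representative `δ.val`).
The generators `σ₁, σ₂, σ₃` correspond to `0, 1, 2 : Fin 3`. -/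
def singerRels (q : ℕ) (δ : Fin 3 → Fin (q + 1) → ZMod (q ^ 2 + q + 1)) :
    Set (FreeGroup (Fin 3)) :=
  {r | (∃ i : Fin 3, r = FreeGroup.of i ^ (q ^ 2 + q + 1)) ∨
    (∃ j : Fin (q + 1),
      r = FreeGroup.of 0 ^ (δ 0 j).val * FreeGroup.of 1 ^ (δ 1 j).val *
        FreeGroup.of 2 ^ (δ 2 j).val)}

/-- The panel-regular `Ã₂`-lattice
`Γ = ⟨σ₁, σ₂, σ₃ ∣ σᵢ^N = 1, σ₁^{δ₁(j)} σ₂^{δ₂(j)} σ₃^{δ₃(j)} = 1 for all j⟩`. -/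
def SingerLattice (q : ℕ) (δ : Fin 3 → Fin (q + 1) → ZMod (q ^ 2 + q + 1)) :=
  PresentedGroup (singerRels q δ)

instance (q : ℕ) (δ : Fin 3 → Fin (q + 1) → ZMod (q ^ 2 + q + 1)) :
    Group (SingerLattice q δ) := by
  unfold SingerLattice; infer_instance

/-- The linear map `𝒟 : (ZMod N)³ → (ZMod N)^q` given by
`𝒟(x₁, x₂, x₃) = (δ₁(j)x₁ + δ₂(j)x₂ + δ₃(j)x₃)_{j = 1, …, q}`. -/
noncomputable def diffMap (q : ℕ) (δ : Fin 3 → Fin (q + 1) → ZMod (q ^ 2 + q + 1)) :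
    (Fin 3 → ZMod (q ^ 2 + q + 1)) →ₗ[ZMod (q ^ 2 + q + 1)] (Fin q → ZMod (q ^ 2 + q + 1)) :=
  Matrix.mulVecLin (Matrix.of fun (j : Fin q) (i : Fin 3) => δ i j.succ)

/-- `Δ ⊆ ZMod N` is a planar difference set of order `q` if it has `q + 1` elements and every
nonzero element of `ZMod N` is uniquely a difference of two elements of `Δ`. -/
def IsPlanarDifferenceSet (q : ℕ) (Δ : Set (ZMod (q ^ 2 + q + 1))) : Prop :=
  Δ.ncard = q + 1 ∧ ∀ x : ZMod (q ^ 2 + q + 1), x ≠ 0 →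
    ∃! de : ZMod (q ^ 2 + q + 1) × ZMod (q ^ 2 + q + 1),
      (de.1 ∈ Δ ∧ de.2 ∈ Δ) ∧ de.1 - de.2 = x

/-! ### Group homology and permutation modules -/

section BarHomology
open CategoryTheory

/-- The homology of `S` as the image of the cycles `Z` in the quotient of `S.X₂` by the
boundaries `B`, which is the shape of `barHomology`. -/
noncomputable def homologyEquivMapMkQ {R : Type} [Ring R] (S : ShortComplex (ModuleCat R))
    {B Z : Submodule R S.X₂} (hB : LinearMap.range S.f.hom = B) (hZ : LinearMap.ker S.g.hom = Z) :
    S.homology ≃ₗ[R] Submodule.map B.mkQ Z :=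
  S.moduleCatHomologyIso.toLinearEquiv ≪≫ₗ
    Submodule.quotEquivOfEq _ (LinearMap.ker (B.mkQ.domRestrict (LinearMap.ker S.g.hom))) (by
      rw [LinearMap.domRestrict, LinearMap.ker_comp, Submodule.ker_mkQ, ← hB]
      exact LinearMap.range_codRestrict _ _ _) ≪≫ₗ
    (B.mkQ.domRestrict _).quotKerEquivRange ≪≫ₗ
    LinearEquiv.ofEq _ _ (by rw [LinearMap.range_domRestrict, hZ])

variable (R G : Type) [CommRing R] [Group G]

lemma barDiff_eq_inhomogeneousChains_d (n : ℕ) :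
    barDiff R G n = (groupHomology.inhomogeneousChains.d (Rep.trivial R G R) n).hom := by
  refine Finsupp.lhom_ext' fun c => LinearMap.ext_ring ?_
  have inner (i : Fin n) : (fun j : Fin n => if (j : ℕ) < (i : ℕ) then c j.castSucc
      else if (j : ℕ) = (i : ℕ) then c i.castSucc * c i.succ else c j.succ) =
      Fin.contractNth i.castSucc (· * ·) c := by
    funext j
    simp only [Fin.contractNth, Fin.val_castSucc]
    split_ifs with hlt heq
    · rfl
    · rw [Fin.ext heq]
    · rfl
  have last : (fun j : Fin n => c j.castSucc) = Fin.contractNth (Fin.last n) (· * ·) c := by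
    funext j
    simp [Fin.contractNth]
  have h := groupHomology.inhomogeneousChains.d_single (A := Rep.trivial R G R) n c (1 : R)
  rw [Fin.sum_univ_castSucc] at h
  simp only [barDiff, inner, last, LinearMap.comp_apply, Finsupp.lsingle_apply, Finsupp.lift_apply,
    Finsupp.sum_single_index, zero_smul, one_smul]
  refine Eq.trans ?_ h.symm
  simp [add_assoc]

lemma range_inhomogeneousChains_d (n : ℕ) :
    LinearMap.range ((groupHomology.inhomogeneousChains (Rep.trivial R G R)).sc n).f.hom =
      barBoundaries R G n := by
  rw [barBoundaries, barDiff_eq_inhomogeneousChains_d, ← groupHomology.inhomogeneousChains.d_def]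
  change LinearMap.range ((groupHomology.inhomogeneousChains (Rep.trivial R G R)).d _ n).hom = _
  rw [ChainComplex.prev]

lemma ker_inhomogeneousChains_d (n : ℕ) :
    LinearMap.ker ((groupHomology.inhomogeneousChains (Rep.trivial R G R)).sc n).g.hom =
      barCycles R G n := by
  change LinearMap.ker ((groupHomology.inhomogeneousChains (Rep.trivial R G R)).d n _).hom = _
  cases n with
  | zero =>
    rw [HomologicalComplex.shape _ _ _ (by simp)]
    exact LinearMap.ker_zero
  | succ n =>
    rw [barCycles, barDiff_eq_inhomogeneousChains_d, ← groupHomology.inhomogeneousChains.d_def,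
      ChainComplex.next_nat_succ]

/-- The homology of the bar complex is the group homology of Mathlib. -/
noncomputable def barHomologyEquiv (n : ℕ) :
    barHomology R G n ≃ₗ[R] groupHomology (Rep.trivial R G R) n :=
  (homologyEquivMapMkQ _ (range_inhomogeneousChains_d R G n)
    (ker_inhomogeneousChains_d R G n)).symm

end BarHomology

section Contraction
open CategoryTheory Finsupp groupHomology Limits

lemma contractNth_zero_cons {M : Type*} [Mul M] {n : ℕ} (a : M) (g : Fin (n + 1) → M) :
    Fin.contractNth 0 (· * ·) (Fin.cons a g : Fin (n + 2) → M) =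
      Fin.cons (a * g 0) (fun i => g i.succ) := by
  funext k
  cases k using Fin.cases <;> simp [Fin.contractNth]

lemma contractNth_succ_cons {M : Type*} [Mul M] {n : ℕ} (a : M) (g : Fin (n + 1) → M)
    (j : Fin (n + 1)) :
    Fin.contractNth j.succ (· * ·) (Fin.cons a g : Fin (n + 2) → M) =
      Fin.cons a (Fin.contractNth j (· * ·) g) := by
  funext k
  cases k using Fin.cases <;> simp [Fin.contractNth]

variable {R G : Type} [CommRing R] [Group G]

/-- The map sending `γ ⊗ a` to the chain `(γ⁻¹, g₁, …, gₙ) ⊗ a`. The inverse makes the face of the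
bar differential that drops the first entry the action of `γ` on `a`. -/
noncomputable def consChain {M : Type} [AddCommGroup M] [Module R M] {n : ℕ} (g : Fin n → G) :
    (G →₀ M) →ₗ[R] ((Fin (n + 1) → G) →₀ M) :=
  lsum R fun γ => lsingle (Fin.cons γ⁻¹ g)

@[simp]
lemma consChain_single {M : Type} [AddCommGroup M] [Module R M] {n : ℕ} (g : Fin n → G) (γ : G)
    (a : M) : consChain (R := R) g (single γ a) = single (Fin.cons γ⁻¹ g) a := by
  simp [consChain]

/-- The differential of the inhomogeneous chain complex of `A` as a linear map. -/
noncomputable def chainDiff (A : Rep.{0} R G) (n : ℕ) :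
    ((Fin (n + 1) → G) →₀ A) →ₗ[R] ((Fin n → G) →₀ A) :=
  (inhomogeneousChains.d A n).hom

lemma chainDiff_single (A : Rep.{0} R G) {n : ℕ} (g : Fin (n + 1) → G) (a : A) :
    chainDiff A n (single g a) = single (fun i => g i.succ) (A.ρ (g 0)⁻¹ a) +
      ∑ j : Fin (n + 1), (-1 : R) ^ ((j : ℕ) + 1) • single (Fin.contractNth j (· * ·) g) a :=
  inhomogeneousChains.d_single n g a

lemma chainDiff_consChain (A : Rep.{0} R G) {n : ℕ} (g : Fin (n + 1) → G) (b : G →₀ A) :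
    chainDiff A (n + 1) (consChain (R := R) g b) =
      single g (b.sum fun γ a => A.ρ γ a)
        - consChain (R := R) (fun i => g i.succ) (b.mapDomain ((g 0)⁻¹ * ·))
        - ∑ j : Fin (n + 1), (-1 : R) ^ ((j : ℕ) + 1) •
            consChain (R := R) (Fin.contractNth j (· * ·) g) b := by
  induction b using Finsupp.induction_linear with
  | zero => simp
  | add b c hb hc =>
    simp only [map_add, hb, hc, mapDomain_add, smul_add, Finset.sum_add_distrib,
      sum_add_index', map_zero, implies_true, single_add]
    abel
  | single γ a =>
    simp only [consChain_single, chainDiff_single]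
    rw [Fin.sum_univ_succ]
    simp only [Fin.cons_succ, Fin.cons_zero, inv_inv, Fin.coe_ofNat_eq_mod, Nat.zero_mod, zero_add,
      pow_succ, pow_zero, mul_neg, mul_one, contractNth_zero_cons, neg_smul, one_smul, Fin.val_succ,
      neg_neg, contractNth_succ_cons, smul_single, map_zero, sum_single_index, mapDomain_single,
      consChain_single, mul_inv_rev, Finset.sum_neg_distrib, sub_neg_eq_add]
    abel

/-- The homotopy `g ⊗ a ↦ (γ⁻¹, g) ⊗ T a` induced by a linear map `T : A → R[G] ⊗ A`. It contracts
the chain complex if `T` is an equivariant section of the action map `γ ⊗ a ↦ γ a`. -/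
noncomputable def contractingHomotopy {A : Rep.{0} R G} (T : A →ₗ[R] (G →₀ A)) (n : ℕ) :
    ((Fin n → G) →₀ A) →ₗ[R] ((Fin (n + 1) → G) →₀ A) :=
  lsum R fun g => consChain (R := R) g ∘ₗ T

lemma contractingHomotopy_single {A : Rep.{0} R G} (T : A →ₗ[R] (G →₀ A)) {n : ℕ}
    (g : Fin n → G) (a : A) :
    contractingHomotopy T n (single g a) = consChain (R := R) g (T a) := by
  simp [contractingHomotopy]

theorem isZero_groupHomology_succ {A : Rep.{0} R G} (T : A →ₗ[R] (G →₀ A))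
    (hT : ∀ g a, T (A.ρ g a) = (T a).mapDomain (g * ·))
    (hsum : ∀ a, (T a).sum (fun γ b => A.ρ γ b) = a) (n : ℕ) :
    IsZero (groupHomology A (n + 1)) := by
  have homotopy (z : (Fin (n + 1) → G) →₀ A) :
      chainDiff A (n + 1) (contractingHomotopy T (n + 1) z) +
        contractingHomotopy T n (chainDiff A n z) = z := by
    induction z using Finsupp.induction_linear with
    | zero => simp
    | add x y hx hy =>
      nth_rw 3 [← hx, ← hy]
      simp only [map_add]
      abel
    | single g a =>
      simp only [contractingHomotopy_single, chainDiff_consChain, hsum, chainDiff_single, map_add,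
        hT, map_sum, map_smul]
      abel
  refine (HomologicalComplex.exactAt_iff_isZero_homology _ _).1 ?_
  rw [HomologicalComplex.exactAt_iff' _ (n + 2) (n + 1) n (by simp) (by simp)]
  rw [ShortComplex.moduleCat_exact_iff]
  intro z hz
  change (inhomogeneousChains A).d (n + 1) n z = 0 at hz
  rw [inhomogeneousChains.d_def] at hz
  refine ⟨contractingHomotopy T (n + 1) z, ?_⟩
  change (inhomogeneousChains A).d (n + 2) (n + 1) _ = z
  rw [inhomogeneousChains.d_def]
  simpa only [show chainDiff A n z = 0 from hz, map_zero, add_zero] using! homotopy z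

end Contraction

section FiniteStabilizers
open CategoryTheory Limits MonoidAlgebra

lemma constr_basis_single {R X M : Type*} [CommSemiring R] [AddCommMonoid M] [Module R M]
    (f : X → M) (x : X) : (basis X R).constr R f (single x 1) = f x :=
  (basis X R).constr_basis R f x

section Transporter
variable {G X : Type*} [Group G] [MulAction G X]

variable (G) in
/-- The elements of `G` that carry `x` to `y`. -/
def transporter (x y : X) : Set G := {γ | γ • x = y}

lemma transporter_smul (g : G) (x y : X) :
    transporter G x (g • y) = (g * ·) '' transporter G x y := by
  ext γ
  simp only [transporter, Set.mem_ofPred_eq, Set.mem_image]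
  constructor
  · intro h
    exact ⟨g⁻¹ * γ, by rw [mul_smul, h, inv_smul_smul], mul_inv_cancel_left g γ⟩
  · rintro ⟨β, h, rfl⟩
    rw [mul_smul, h]

lemma ncard_transporter_smul (g : G) (x : X) :
    (transporter G x (g • x)).ncard = Nat.card (MulAction.stabilizer G x) := by
  rw [transporter_smul, Set.ncard_image_of_injective _ (mul_right_injective g)]
  rfl

lemma finite_transporter (x : X) [Finite (MulAction.stabilizer G x)] (y : X) :
    (transporter G x y).Finite := by
  obtain hempty | ⟨g, rfl⟩ := (transporter G x y).eq_empty_or_nonempty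
  · exact hempty ▸ Set.finite_empty
  · rw [transporter_smul]
    exact (Set.toFinite (MulAction.stabilizer G x : Set G)).image _

end Transporter

variable {R G X : Type} [CommRing R] [Group G] [MulAction G X]

variable (G) in
/-- A representative of the orbit of `x`, depending only on the orbit. -/
noncomputable def orbitRep (x : X) : X :=
  (Quotient.mk (MulAction.orbitRel G X) x).out

lemma exists_smul_orbitRep (x : X) : ∃ g : G, g • orbitRep G x = x :=
  (MulAction.orbitRel G X).symm (Quotient.mk_out (s := MulAction.orbitRel G X) x)

lemma orbitRep_smul (g : G) (x : X) : orbitRep G (g • x) = orbitRep G x :=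
  congrArg Quotient.out (Quotient.sound (s := MulAction.orbitRel G X) ⟨g, rfl⟩)

variable (R G X) in
/-- The map sending `x` to the average of `γ ⊗ orbitRep G x` over all `γ` carrying `orbitRep G x` to
`x`. It is an equivariant section of the action map if the orders of the stabilizers are units. -/
noncomputable def averagedLift [∀ x : X, Finite (MulAction.stabilizer G x)] :
    MonoidAlgebra R X →ₗ[R] (G →₀ MonoidAlgebra R X) :=
  (basis X R).constr R fun x =>
    ∑ γ ∈ (finite_transporter (G := G) (orbitRep G x) x).toFinset,
      Finsupp.single γ (MonoidAlgebra.single (orbitRep G x)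
        (Ring.inverse (Nat.card (MulAction.stabilizer G (orbitRep G x)) : R)))

lemma averagedLift_single [∀ x : X, Finite (MulAction.stabilizer G x)] (x : X) :
    averagedLift R G X (.single x 1) =
    ∑ γ ∈ (finite_transporter (G := G) (orbitRep G x) x).toFinset,
      Finsupp.single γ (MonoidAlgebra.single (orbitRep G x)
        (Ring.inverse (Nat.card (MulAction.stabilizer G (orbitRep G x)) : R))) :=
  constr_basis_single _ x

lemma averagedLift_ofMulAction [∀ x : X, Finite (MulAction.stabilizer G x)] (g : G)
    (a : MonoidAlgebra R X) :
    averagedLift R G X (Representation.ofMulAction R G X g a) =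
      (averagedLift R G X a).mapDomain (g * ·) := by
  classical
  suffices averagedLift R G X ∘ₗ Representation.ofMulAction R G X g =
      Finsupp.lmapDomain _ R (g * ·) ∘ₗ averagedLift R G X from LinearMap.congr_fun this a
  refine (basis X R).ext fun x => ?_
  have himage : (finite_transporter (G := G) (orbitRep G x) (g • x)).toFinset =
      (finite_transporter (G := G) (orbitRep G x) x).toFinset.image (g * ·) := by
    ext γ
    simp [transporter_smul]
  simp only [LinearMap.comp_apply, basis_apply, Representation.ofMulAction_single,
    averagedLift_single, map_sum, Finsupp.lmapDomain_apply, Finsupp.mapDomain_single,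
    orbitRep_smul, himage]
  rw [Finset.sum_image fun _ _ _ _ h => mul_right_injective g h]

lemma sum_averagedLift [∀ x : X, Finite (MulAction.stabilizer G x)]
    (h : ∀ x : X, IsUnit (Nat.card (MulAction.stabilizer G x) : R)) (a : MonoidAlgebra R X) :
    (averagedLift R G X a).sum (fun γ b => Representation.ofMulAction R G X γ b) = a := by
  suffices Finsupp.lsum R (fun γ => Representation.ofMulAction R G X γ) ∘ₗ averagedLift R G X =
    .id from LinearMap.congr_fun this a
  refine (basis X R).ext fun x => ?_
  obtain ⟨g, hg⟩ := exists_smul_orbitRep (G := G) x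
  have hcard : (finite_transporter (G := G) (orbitRep G x) x).toFinset.card =
      Nat.card (MulAction.stabilizer G (orbitRep G x)) := by
    rw [← Set.ncard_eq_toFinset_card _ (finite_transporter _ _), ← ncard_transporter_smul g, hg]
  have hterm : ∀ γ ∈ (finite_transporter (G := G) (orbitRep G x) x).toFinset,
      γ • orbitRep G x = x := fun γ hγ =>
    show γ ∈ transporter G (orbitRep G x) x from (Set.Finite.mem_toFinset _).1 hγ
  simp only [LinearMap.comp_apply, basis_apply, averagedLift_single, map_sum,
    Finsupp.lsum_single, Representation.ofMulAction_single, LinearMap.id_apply]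
  rw [Finset.sum_congr rfl fun γ hγ => by rw [hterm γ hγ], Finset.sum_const, hcard,
    ← Nat.cast_smul_eq_nsmul R, MonoidAlgebra.smul_single, smul_eq_mul,
    Ring.mul_inverse_cancel _ (h _)]

theorem isZero_groupHomology_ofMulAction_succ [∀ x : X, Finite (MulAction.stabilizer G x)]
    (h : ∀ x : X, IsUnit (Nat.card (MulAction.stabilizer G x) : R)) (n : ℕ) :
    IsZero (groupHomology (Rep.ofMulAction R G X) (n + 1)) :=
  isZero_groupHomology_succ (averagedLift R G X) averagedLift_ofMulAction (sum_averagedLift h) n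

end FiniteStabilizers

section DimensionShift
open CategoryTheory Limits groupHomology

lemma shortExact_kernel_ι {C : Type*} [Category* C] [Abelian C] {X Y : C} (f : X ⟶ Y) [Epi f] :
    (ShortComplex.mk (kernel.ι f) f (kernel.condition f)).ShortExact where
  exact := ShortComplex.exact_kernel f

lemma shortExact_kernelLift {C : Type*} [Category* C] [Abelian C] {C₂ C₁ C₀ M : C} {d₂ : C₂ ⟶ C₁}
    [Mono d₂] {d₁ : C₁ ⟶ C₀} {ε : C₀ ⟶ M} {h₂ : d₂ ≫ d₁ = 0} {h₁ : d₁ ≫ ε = 0}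
    (hC₁ : (ShortComplex.mk d₂ d₁ h₂).Exact) (hC₀ : (ShortComplex.mk d₁ ε h₁).Exact) :
    (ShortComplex.mk d₂ (kernel.lift ε d₁ h₁)
      (by rw [← cancel_mono (kernel.ι ε)]; simpa using h₂)).ShortExact where
  exact := by
    let φ : ShortComplex.mk d₂ (kernel.lift ε d₁ h₁)
        (by rw [← cancel_mono (kernel.ι ε)]; simpa using h₂) ⟶ ShortComplex.mk d₂ d₁ h₂ :=
      { τ₁ := 𝟙 _, τ₂ := 𝟙 _, τ₃ := kernel.ι ε }
    have : Epi φ.τ₁ := inferInstanceAs (Epi (𝟙 _))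
    have : IsIso φ.τ₂ := inferInstanceAs (IsIso (𝟙 _))
    have : Mono φ.τ₃ := inferInstanceAs (Mono (kernel.ι ε))
    exact (ShortComplex.exact_iff_of_epi_of_isIso_of_mono φ).2 hC₁
  epi_g := hC₀.epi_kernelLift

variable {R G : Type} [CommRing R] [Group G]

lemma range_δ_zero {X : ShortComplex (Rep.{0} R G)} (hX : X.ShortExact) :
    LinearMap.range (δ hX 1 0 rfl).hom =
      (LinearMap.ker (Representation.Coinvariants.map X.X₁.ρ X.X₂.ρ X.f.hom)).comap
        (H0Iso X.X₁).toLinearEquiv.toLinearMap := by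
  have hnat : (H0Iso X.X₂).hom.hom ∘ₗ (map (MonoidHom.id G) X.f 0).hom =
      Representation.Coinvariants.map X.X₁.ρ X.X₂.ρ X.f.hom ∘ₗ (H0Iso X.X₁).hom.hom :=
    congrArg ModuleCat.Hom.hom (map_id_comp_H0Iso_hom X.f)
  have hinj : LinearMap.ker (H0Iso X.X₂).hom.hom = ⊥ := (H0Iso X.X₂).toLinearEquiv.ker
  refine (mapShortComplex₁_exact hX rfl).moduleCat_range_eq_ker.trans ?_
  change LinearMap.ker (map (MonoidHom.id G) X.f 0).hom =
    (LinearMap.ker (Representation.Coinvariants.map X.X₁.ρ X.X₂.ρ X.f.hom)).comap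
      (H0Iso X.X₁).hom.hom
  rw [← LinearMap.ker_comp, ← hnat, LinearMap.ker_comp, hinj]
  rfl

/-- For a short exact sequence `0 → X₁ → X₂ → X₃ → 0` with `H₁(G; X₂) = 0`, the connecting map
identifies `H₁(G; X₃)` with the kernel of `(X₁)_G → (X₂)_G`. -/
noncomputable def groupHomologyOneEquivKer {X : ShortComplex (Rep.{0} R G)} (hX : X.ShortExact)
    (h : IsZero (groupHomology X.X₂ 1)) :
    groupHomology X.X₃ 1 ≃ₗ[R]
      LinearMap.ker (Representation.Coinvariants.map X.X₁.ρ X.X₂.ρ X.f.hom) :=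
  (LinearEquiv.ofInjective (δ hX 1 0 rfl).hom
    ((ModuleCat.mono_iff_injective _).1 (mono_δ_of_isZero hX 0 h))) ≪≫ₗ
  LinearEquiv.ofEq _ _ (range_δ_zero hX) ≪≫ₗ
  (H0Iso X.X₁).toLinearEquiv.ofSubmodule' _

/-- Dimension shifting along a short exact sequence `0 → X₁ → X₂ → X₃ → 0` with acyclic `X₂`. -/
noncomputable def groupHomologySuccIso {X : ShortComplex (Rep.{0} R G)} (hX : X.ShortExact)
    (h : ∀ n, IsZero (groupHomology X.X₂ (n + 1))) (n : ℕ) :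
    groupHomology X.X₃ (n + 2) ≅ groupHomology X.X₁ (n + 1) :=
  have := isIso_δ_of_isZero hX (n + 1) (h (n + 1)) (h n)
  asIso (δ hX (n + 2) (n + 1) rfl)

variable {C₂ C₁ C₀ M : Rep.{0} R G} {d₂ : C₂ ⟶ C₁} [Mono d₂] {d₁ : C₁ ⟶ C₀} {ε : C₀ ⟶ M} [Epi ε]
  {h₂ : d₂ ≫ d₁ = 0} {h₁ : d₁ ≫ ε = 0}

/-- For an exact sequence `0 → C₂ → C₁ → C₀ → M → 0` with acyclic `C₁` and `C₀`, dimension shifting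
identifies `H₂(G; M)` with the kernel of `(C₂)_G → (C₁)_G`. -/
noncomputable def groupHomologyTwoEquivKer
    (hC₁ : (ShortComplex.mk d₂ d₁ h₂).Exact) (hC₀ : (ShortComplex.mk d₁ ε h₁).Exact)
    (acyclic₁ : ∀ n, IsZero (groupHomology C₁ (n + 1)))
    (acyclic₀ : ∀ n, IsZero (groupHomology C₀ (n + 1))) :
    groupHomology M 2 ≃ₗ[R] LinearMap.ker (Representation.Coinvariants.map C₂.ρ C₁.ρ d₂.hom) :=
  (groupHomologySuccIso (shortExact_kernel_ι ε) acyclic₀ 0).toLinearEquiv ≪≫ₗ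
    groupHomologyOneEquivKer (shortExact_kernelLift hC₁ hC₀) (acyclic₁ 0)

lemma isZero_groupHomology_add_three
    (hC₁ : (ShortComplex.mk d₂ d₁ h₂).Exact) (hC₀ : (ShortComplex.mk d₁ ε h₁).Exact)
    (acyclic₂ : ∀ n, IsZero (groupHomology C₂ (n + 1)))
    (acyclic₁ : ∀ n, IsZero (groupHomology C₁ (n + 1)))
    (acyclic₀ : ∀ n, IsZero (groupHomology C₀ (n + 1))) (n : ℕ) :
    IsZero (groupHomology M (n + 3)) :=
  (acyclic₂ n).of_iso <| groupHomologySuccIso (shortExact_kernel_ι ε) acyclic₀ (n + 1) ≪≫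
    groupHomologySuccIso (shortExact_kernelLift hC₁ hC₀) acyclic₁ n

end DimensionShift

section PermutationModule
open CategoryTheory MonoidAlgebra

lemma basis_coord_single {R X : Type*} [CommRing R] [DecidableEq X] (x y : X) :
    (basis X R).coord x (single y 1) = if y = x then 1 else 0 := by
  rw [← basis_apply, Module.Basis.coord_apply, Module.Basis.repr_self, Finsupp.single_apply]

variable {R G X : Type} [CommRing R] [Group G] [MulAction G X]

lemma rep_exact_iff {S : ShortComplex (Rep.{0} R G)} :
    S.Exact ↔ ∀ x, S.g.hom x = 0 → ∃ y, S.f.hom y = x :=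
  (ShortComplex.exact_map_iff_of_faithful S (forget₂ (Rep R G) (ModuleCat R))).symm.trans
    (ShortComplex.moduleCat_exact_iff _)

lemma hom_ofMulAction_ext {B : Rep.{0} R G} {f f' : Rep.ofMulAction R G X ⟶ B}
    (h : ∀ x, f.hom (single x 1 : R[X]) = f'.hom (single x 1 : R[X])) : f = f' :=
  Rep.hom_ext <| Representation.IntertwiningMap.ext <| (basis X R).ext h

/-- The morphism `R[X] ⟶ A` extending an equivariant map `f : X → A`. -/
noncomputable def liftOfMulAction (A : Rep.{0} R G) (f : X → A)
    (hf : ∀ g x, f (g • x) = A.ρ g (f x)) : Rep.ofMulAction R G X ⟶ A :=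
  Rep.ofHom ⟨(basis X R).constr R f, fun g => (basis X R).ext fun x => by
    simp only [LinearMap.comp_apply, basis_apply, Representation.ofMulAction_single,
      constr_basis_single, hf]⟩

lemma liftOfMulAction_single (A : Rep.{0} R G) (f : X → A)
    (hf : ∀ g x, f (g • x) = A.ρ g (f x)) (x : X) :
    (liftOfMulAction A f hf).hom (single x 1 : R[X]) = f x :=
  constr_basis_single f x

variable {ι : Type} {Y : ι → Type} [∀ i, MulAction G (Y i)] [∀ i, Nonempty (Y i)]
  [∀ i, MulAction.IsPretransitive G (Y i)]

variable (R G Y) in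
/-- The coinvariants of a permutation module are free on the orbits. -/
noncomputable def coinvariantsSigmaEquiv :
    (Representation.ofMulAction R G (Σ i, Y i)).Coinvariants ≃ₗ[R] (ι →₀ R) :=
  .ofLinearMap
    (Representation.Coinvariants.lift _
      ((basis (Σ i, Y i) R).constr R fun x => Finsupp.single x.1 1) fun g =>
        (basis _ R).ext fun x => by
          rw [LinearMap.comp_apply, basis_apply, Representation.ofMulAction_single,
            constr_basis_single, constr_basis_single]
          rfl)
    (Finsupp.lsum R fun i => LinearMap.toSpanSingleton R _
      (Representation.Coinvariants.mk _ (single ⟨i, Classical.arbitrary (Y i)⟩ 1)))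
    (Finsupp.lhom_ext' fun i => LinearMap.ext_ring <| by
      simp [constr_basis_single])
    (Representation.Coinvariants.hom_ext <| (basis _ R).ext fun ⟨i, y⟩ => by
      obtain ⟨g, hg⟩ := MulAction.exists_smul_eq G y (Classical.arbitrary (Y i))
      have hmk := Representation.Coinvariants.mk_self_apply
        (Representation.ofMulAction R G (Σ i, Y i)) g (single ⟨i, y⟩ 1)
      rw [Representation.ofMulAction_single, Sigma.smul_mk, hg] at hmk
      simp [constr_basis_single, hmk])

lemma coinvariantsSigmaEquiv_mk_single (i : ι) (y : Y i) :
    coinvariantsSigmaEquiv R G Y (Representation.Coinvariants.mk _ (single ⟨i, y⟩ 1)) =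
      Finsupp.single i 1 :=
  constr_basis_single (fun x : Σ i, Y i => Finsupp.single x.1 (1 : R)) ⟨i, y⟩

end PermutationModule

/-! ### Homotopy of words -/

section Words

variable {A J : Type*} [AddCommGroup A] (δ : Fin 3 → J → A)

/-- Elementary homotopies of words. A word `[a₀, a₁, …]` of type `i` describes an edge path through
vertices of types `i, i + 1, …` in the building, `aₖ` being the turn at the `k`-th vertex; it stands
for the product `σᵢ^a₀ σᵢ₊₁^a₁ ⋯`. An elementary homotopy replaces the middle vertex of a segment
of length two whose end points are adjacent. -/
inductive Move : Fin 3 → List A → List A → Prop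
  | triangle (i : Fin 3) (a c : A) (j k : J) (w : List A) :
      Move i ((a + δ i j) :: δ (i + 1) j :: (c + δ (i + 1 + 1) j) :: w)
        ((a + δ i k) :: δ (i + 1) k :: (c + δ (i + 1 + 1) k) :: w)
  | cons (i : Fin 3) (a : A) {x y : List A} : Move (i + 1) x y → Move i (a :: x) (a :: y)

/-- Two words of type `i` are homotopic if they are linked by elementary homotopies. -/
def Homotopic (i : Fin 3) : List A → List A → Prop := Relation.ReflTransGen (Move δ i)

/-- The word `[δᵢ₊₁(j), c + δᵢ₊₂(j), w]` of type `i + 1`.  Prefixed by `a + δᵢ(j)`, these words are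
homotopic to each other for varying `j`. -/
def detour (i : Fin 3) (j : J) (c : A) (w : List A) : List A :=
  δ (i + 1) j :: (c + δ (i + 1 + 1) j) :: w

/-- `δ` consists of three planar difference families with a common zero: every nonzero element of
`A` is uniquely a difference of two values of `δ i`. -/
structure IsPlanar : Prop where
  exists_eq_zero : ∃ o, ∀ i, δ i o = 0
  exists_sub_eq : ∀ i d, d ≠ 0 → ∃ j k, δ i j - δ i k = d
  eq_of_sub_eq_sub : ∀ {i j k j' k'}, j ≠ k → δ i j - δ i k = δ i j' - δ i k' → j = j' ∧ k = k'

/-- The local form of a homotopy between the words `a :: x` and `b :: y` of type `i`: either the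
heads agree, or the two paths pass through opposite vertices of a common pair of triangles. -/
def LocallyHomotopic (i : Fin 3) (a : A) (x : List A) (b : A) (y : List A) : Prop :=
  (a = b ∧ Homotopic δ (i + 1) x y) ∨
    ∃ e j k c w, a = e + δ i j ∧ b = e + δ i k ∧
      Homotopic δ (i + 1) x (detour δ i j c w) ∧ Homotopic δ (i + 1) y (detour δ i k c w)

variable {δ} {i : Fin 3}

lemma add_three (i : Fin 3) : i + 1 + 1 + 1 = i := by
  decide +revert

instance : Std.Symm (Move δ i) where
  symm x y h := by
    induction h with
    | triangle i a c j k w => exact .triangle i a c k j w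
    | cons i a _ ih => exact .cons i a ih

lemma Move.length_eq {x y : List A} (h : Move δ i x y) : x.length = y.length := by
  induction h with
  | triangle => rfl
  | cons _ _ _ ih => exact congrArg Nat.succ ih

lemma Move.modifyHead_add {x y : List A} (h : Move δ i x y) (e : A) :
    Move δ i (x.modifyHead (e + ·)) (y.modifyHead (e + ·)) := by
  cases h with
  | triangle _ a c j k w =>
    simpa only [List.modifyHead_cons, ← add_assoc] using Move.triangle i (e + a) c j k w
  | cons _ _ h => exact .cons i _ h

namespace Homotopic

lemma refl (x : List A) : Homotopic δ i x x := Relation.ReflTransGen.refl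

lemma trans {x y z : List A} (h : Homotopic δ i x y) (h' : Homotopic δ i y z) :
    Homotopic δ i x z := Relation.ReflTransGen.trans h h'

lemma symm {x y : List A} (h : Homotopic δ i x y) : Homotopic δ i y x :=
  Relation.ReflTransGen.stdSymm.symm _ _ h

lemma length_eq {x y : List A} (h : Homotopic δ i x y) : x.length = y.length := by
  induction h with
  | refl => rfl
  | tail _ h ih => exact ih.trans h.length_eq

lemma cons {x y : List A} (h : Homotopic δ (i + 1) x y) (a : A) :
    Homotopic δ i (a :: x) (a :: y) :=
  Relation.ReflTransGen.lift (a :: ·) (fun _ _ => Move.cons i a) _ _ h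

lemma add_head {a b : A} {x y : List A} (h : Homotopic δ i (a :: x) (b :: y)) (e : A) :
    Homotopic δ i ((e + a) :: x) ((e + b) :: y) :=
  Relation.ReflTransGen.lift (List.modifyHead (e + ·))
    (fun _ _ hm => Move.modifyHead_add hm e) _ _ h

lemma detour_cons (i : Fin 3) (a c : A) (j k : J) (w : List A) :
    Homotopic δ i ((a + δ i j) :: detour δ i j c w) ((a + δ i k) :: detour δ i k c w) :=
  .single (.triangle i a c j k w)

lemma detour_congr {c d : A} {w v : List A} (h : Homotopic δ (i + 1 + 1) (c :: w) (d :: v))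
    (j : J) : Homotopic δ (i + 1) (detour δ i j c w) (detour δ i j d v) := by
  simpa only [detour, add_comm (δ _ j)] using (h.add_head (δ (i + 1 + 1) j)).cons (δ (i + 1) j)

lemma detour_zero (i : Fin 3) (d : A) (j k : J) (w : List A) :
    Homotopic δ (i + 1) (detour δ i j 0 ((d + δ i j) :: w))
      (detour δ i k 0 ((d + δ i k) :: w)) := by
  simpa only [detour, zero_add, add_three] using detour_cons (δ := δ) (i + 1) 0 d j k w

end Homotopic

namespace IsPlanar

variable (H : IsPlanar δ)
include H

lemma injective (i : Fin 3) : Function.Injective (δ i) := by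
  intro j k h
  by_contra hjk
  exact hjk (H.eq_of_sub_eq_sub hjk (j' := k) (k' := j) (by rw [h])).1

lemma exists_eq_add (i : Fin 3) {a b : A} (h : a ≠ b) :
    ∃ e j k, a = e + δ i j ∧ b = e + δ i k := by
  obtain ⟨j, k, hjk⟩ := H.exists_sub_eq i (a - b) (sub_ne_zero.2 h)
  exact ⟨a - δ i j, j, k, by abel, by rw [← sub_sub_cancel a b, ← hjk]; abel⟩

lemma eq_of_add_eq_add {e : A} {j k j' k' : J} (hjk : j ≠ k) (hj : δ i j = e + δ i j')
    (hk : δ i k = e + δ i k') : e = 0 ∧ j = j' ∧ k = k' := by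
  obtain ⟨rfl, rfl⟩ := H.eq_of_sub_eq_sub (j' := j') (k' := k') hjk (by rw [hj, hk]; abel)
  exact ⟨right_eq_add.1 hj, rfl, rfl⟩

end IsPlanar

namespace LocallyHomotopic

lemma of_move {a b : A} {x y : List A} (h : Move δ i (a :: x) (b :: y)) :
    LocallyHomotopic δ i a x b y := by
  cases h with
  | triangle _ e c j k w => exact .inr ⟨e, j, k, c, w, rfl, rfl, .refl _, .refl _⟩
  | cons _ _ h => exact .inl ⟨rfl, .single h⟩

lemma cancel (H : IsPlanar δ) {a : A} {x y : List A} (h : LocallyHomotopic δ i a x a y) :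
    Homotopic δ (i + 1) x y := by
  obtain ⟨-, h⟩ | ⟨e, j, k, c, w, hj, hk, hx, hy⟩ := h
  · exact h
  · obtain rfl : j = k := H.injective i (add_left_cancel (hj.symm.trans hk))
    exact hx.trans hy.symm

lemma of_detour_zero (H : IsPlanar δ) {a b d : A} {x y w : List A} {j k : J}
    (hx : Homotopic δ (i + 1) x (detour δ i j 0 ((d - a + δ i j) :: w)))
    (hy : Homotopic δ (i + 1) y (detour δ i k 0 ((d - b + δ i k) :: w))) :
    LocallyHomotopic δ i a x b y := by
  obtain rfl | hab := eq_or_ne a b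
  · exact .inl ⟨rfl, (hx.trans (.detour_zero i _ j k w)).trans hy.symm⟩
  · obtain ⟨e, j', k', rfl, rfl⟩ := H.exists_eq_add i hab
    refine .inr ⟨e, j', k', 0, (d - e) :: w, rfl, rfl, ?_, ?_⟩
    · convert hx.trans (.detour_zero i _ j j' w) using 3; abel
    · convert hy.trans (.detour_zero i _ k k' w) using 3; abel

/-- If the two local homotopies pass through the same vertex in the middle, it can be bypassed;
otherwise the induction hypothesis forces the paths to meet again two steps later. -/
lemma trans (H : IsPlanar δ) {a b c : A} {x y z : List A}
    (ih : ∀ {a' b' : A} {x' y' : List A}, x'.length < y.length →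
      Homotopic δ (i + 1) (a' :: x') (b' :: y') → LocallyHomotopic δ (i + 1) a' x' b' y')
    (hxy : LocallyHomotopic δ i a x b y) (hyz : LocallyHomotopic δ i b y c z) :
    LocallyHomotopic δ i a x c z := by
  obtain ⟨rfl, hxy⟩ | ⟨e, j₁, j₂, f, u, rfl, he, hx, hy⟩ := hxy
  · obtain ⟨rfl, hyz⟩ | ⟨e, j, k, f, w, ha, hb, hy, hz⟩ := hyz
    · exact .inl ⟨rfl, hxy.trans hyz⟩
    · exact .inr ⟨e, j, k, f, w, ha, hb, hxy.trans hy, hz⟩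
  obtain ⟨rfl, hyz⟩ | ⟨e', j₃, j₄, f', w, he', rfl, hy', hz⟩ := hyz
  · exact .inr ⟨e, j₁, j₂, f, u, rfl, he, hx, hyz.symm.trans hy⟩
  have hlink := ih (by simp [hy.length_eq, detour]) (hy.symm.trans hy')
  have key := he.symm.trans he'
  obtain rfl | hj := eq_or_ne j₂ j₃
  · obtain rfl : e = e' := add_right_cancel key
    have hfu : Homotopic δ (i + 1 + 1) (f :: u) (f' :: w) := by
      simpa [add_comm] using (hlink.cancel H).add_head (-δ (i + 1 + 1) j₂)
    exact .inr ⟨e, j₁, j₄, f', w, rfl, rfl, hx.trans (hfu.detour_congr j₁), hz⟩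
  · obtain ⟨h, -⟩ | ⟨e₀, j, k, g, v, h₂, h₃, hu, hw⟩ := hlink
    · exact absurd (H.injective _ h) hj
    obtain ⟨rfl, rfl, rfl⟩ := H.eq_of_add_eq_add hj h₂ h₃
    have hfu : Homotopic δ (i + 1 + 1) (f :: u) (0 :: (g + δ i j₂) :: v) := by
      simpa [detour, add_three] using hu.add_head (-δ (i + 1 + 1) j₂)
    have hfw : Homotopic δ (i + 1 + 1) (f' :: w) (0 :: (g + δ i j₃) :: v) := by
      simpa [detour, add_three] using hw.add_head (-δ (i + 1 + 1) j₃)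
    refine of_detour_zero (d := g + b) (w := v) (j := j₁) (k := j₄) H ?_ ?_
    · convert hx.trans (hfu.detour_congr j₁) using 3; rw [he]; abel
    · convert hz.trans (hfw.detour_congr j₄) using 3; rw [he']; abel

end LocallyHomotopic

namespace Homotopic

variable (H : IsPlanar δ)
include H

theorem locallyHomotopic {a b : A} {x y : List A} (h : Homotopic δ i (a :: x) (b :: y)) :
    LocallyHomotopic δ i a x b y := by
  induction hn : x.length using Nat.strong_induction_on generalizing i a b x y with
  | _ n ih =>
  generalize hu : a :: x = u at h
  generalize hv : b :: y = v at h
  induction h using Relation.ReflTransGen.head_induction_on generalizing a x with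
  | refl =>
    obtain ⟨rfl, rfl⟩ := List.cons.inj (hu.trans hv.symm)
    exact .inl ⟨rfl, .refl _⟩
  | @head _ u' hm _ ih' =>
    subst hu
    obtain ⟨c, z, rfl⟩ : ∃ c z, c :: z = u' := by cases hm <;> exact ⟨_, _, rfl⟩
    have hlen : z.length = n := by rw [← hn]; exact (Nat.succ.inj hm.length_eq).symm
    exact .trans H (fun hlt h => ih _ (hlen ▸ hlt) h rfl) (.of_move hm) (ih' hlen rfl)

lemma cancel {a : A} {x y : List A} (h : Homotopic δ i (a :: x) (a :: y)) :
    Homotopic δ (i + 1) x y :=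
  (h.locallyHomotopic H).cancel H

lemma garside_comm (i : Fin 3) (a b : A) (x : List A) :
    Homotopic δ i (a :: 0 :: 0 :: b :: x) ((a + b) :: 0 :: 0 :: 0 :: x) := by
  obtain ⟨o, ho⟩ := H.exists_eq_zero
  have shift (a b : A) (j : J) :
      Homotopic δ i (a :: 0 :: 0 :: b :: x) ((a + δ i j) :: 0 :: 0 :: (b - δ i j) :: x) := by
    have h₁ := detour_cons (δ := δ) i a 0 o j (b :: x)
    have h₂ := (detour_zero (δ := δ) i (b - δ i j) j o x).cons (a + δ i j)
    simp only [detour, ho, add_zero, zero_add, sub_add_cancel] at h₁ h₂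
    exact h₁.trans h₂
  obtain rfl | hb := eq_or_ne b 0
  · rw [add_zero]; exact .refl _
  · obtain ⟨j, k, rfl⟩ := H.exists_sub_eq i b hb
    have h := shift (a + (δ i j - δ i k)) 0 k
    rw [add_assoc, sub_add_cancel, zero_sub] at h
    exact (by simpa using shift a (δ i j - δ i k) j :
      Homotopic δ i _ ((a + δ i j) :: 0 :: 0 :: (-δ i k) :: x)).trans h.symm

lemma garside_cons (i : Fin 3) (a : A) (x : List A) :
    Homotopic δ i (0 :: 0 :: 0 :: a :: x) (a :: 0 :: 0 :: 0 :: x) := by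
  simpa using garside_comm H i 0 a x

end Homotopic

/-- The product of the word `w` with the `n`-th power of the Garside element `[0, 0, 0]`. -/
def garside : ℕ → List A → List A
  | 0, w => w
  | n + 1, w => 0 :: 0 :: 0 :: garside n w

lemma garside_zero_cons (n : ℕ) (w : List A) : garside n (0 :: w) = 0 :: garside n w := by
  induction n with
  | zero => rfl
  | succ n ih => simp only [garside, ih]

lemma garside_add (m n : ℕ) (w : List A) : garside (m + n) w = garside m (garside n w) := by
  induction m with
  | zero => rw [Nat.zero_add]; rfl
  | succ m ih => rw [Nat.add_right_comm, garside, ih]; rfl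

lemma length_garside (n : ℕ) (w : List A) : (garside n w).length = 3 * n + w.length := by
  induction n with
  | zero => simp [garside]
  | succ n ih => simp only [garside, List.length_cons, ih]; ring

namespace Homotopic

lemma garside {x y : List A} (h : Homotopic δ i x y) (n : ℕ) :
    Homotopic δ i (garside n x) (Stmt7.garside n y) := by
  induction n with
  | zero => exact h
  | succ n ih => exact .cons (.cons (.cons (by rwa [add_three]) 0) 0) 0

variable (H : IsPlanar δ)
include H

lemma garside_cancel {n : ℕ} {x y : List A}
    (h : Homotopic δ i (Stmt7.garside n x) (Stmt7.garside n y)) : Homotopic δ i x y := by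
  induction n with
  | zero => exact h
  | succ n ih => exact ih (by simpa only [add_three] using ((h.cancel H).cancel H).cancel H)

lemma garside_cons_comm (n : ℕ) (a : A) (x : List A) :
    Homotopic δ i (Stmt7.garside n (a :: x)) (a :: Stmt7.garside n x) := by
  induction n with
  | zero => exact .refl _
  | succ n ih => exact (ih.garside 1).trans (garside_cons H i a _)

end Homotopic

variable (δ) in
/-- A word is Garside-divisible if it is homotopic to a multiple of the Garside element. -/
def GarsideDvd (i : Fin 3) (w : List A) : Prop :=
  ∃ c x, Homotopic δ i w (0 :: 0 :: 0 :: c :: x)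

namespace GarsideDvd

variable (H : IsPlanar δ)
include H

lemma add_head {b : A} {x : List A} (h : GarsideDvd δ i (b :: x)) (a : A) :
    GarsideDvd δ i ((a + b) :: x) := by
  obtain ⟨c, u, h⟩ := h
  have h' := (h.add_head a).trans (.garside_comm H i _ c u)
  exact ⟨_, u, h'.trans (.symm (.garside_cons H i _ u))⟩

lemma of_detour {c : A} {x : List A} {j k : J} (hjk : j ≠ k)
    (hj : GarsideDvd δ (i + 1) (detour δ i j c x)) (hk : GarsideDvd δ (i + 1) (detour δ i k c x)) :
    GarsideDvd δ (i + 1 + 1) (c :: x) := by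
  obtain ⟨d, u, hu⟩ := hj
  obtain ⟨e, v, hv⟩ := hk
  have htri : Homotopic δ i (δ i j :: detour δ i j c x) (δ i k :: detour δ i k c x) := by
    simpa using Homotopic.detour_cons (δ := δ) i 0 c j k x
  have hfront {l : J} {w z : List A} (h : Homotopic δ (i + 1) w (0 :: 0 :: 0 :: z)) :
      Homotopic δ i (δ i l :: w) (garside 1 (δ i l :: z)) :=
    (h.cons (δ i l)).trans (.symm (.garside_cons H i _ z))
  have hdiv := ((hfront hu).symm.trans (htri.trans (hfront hv))).garside_cancel H
  obtain ⟨h, -⟩ | ⟨a, j', k', g, w, h₁, h₂, hdu, -⟩ := hdiv.locallyHomotopic H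
  · exact absurd (H.injective i h) hjk
  obtain ⟨rfl, rfl, rfl⟩ := H.eq_of_add_eq_add hjk h₁ h₂
  have hdetour : Homotopic δ (i + 1) (detour δ i j c x) (δ (i + 1) j :: 0 :: 0 :: 0 :: _) :=
    hu.trans ((hdu.garside 1).trans (.garside_cons H _ _ _))
  have hdvd : GarsideDvd δ (i + 1 + 1) ((c + δ (i + 1 + 1) j) :: x) :=
    ⟨_, _, hdetour.cancel H⟩
  simpa using hdvd.add_head H (-δ (i + 1 + 1) j)

end GarsideDvd

variable (δ) in
/-- Words of type `0` up to homotopy and multiplication by the Garside element. -/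
def stableSetoid : Setoid (List A) where
  r x y := ∃ m n, Homotopic δ 0 (garside m x) (garside n y)
  iseqv :=
    { refl := fun _ => ⟨0, 0, .refl _⟩
      symm := fun ⟨m, n, h⟩ => ⟨n, m, h.symm⟩
      trans := fun ⟨m, n, h⟩ ⟨m', n', h'⟩ => by
        refine ⟨m' + m, n + n', ?_⟩
        rw [garside_add, garside_add]
        refine (h.garside m').trans ?_
        rw [← garside_add, add_comm, garside_add]
        exact h'.garside n }

variable (δ) in
/-- Stable classes of words, on which the lattice acts.  The stable class of a word records the
group element it represents, before this is known to be well defined. -/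
def StableClass : Type _ := Quotient (stableSetoid δ)

/-- The word `w` of type `i`, preceded by zeros to turn it into a word of type `0`. -/
def pad (i : Fin 3) (w : List A) : List A := List.replicate i 0 ++ w

lemma garside_pad (n : ℕ) (w : List A) : garside n (pad i w) = pad i (garside n w) := by
  fin_cases i <;> simp [pad, garside_zero_cons, List.replicate_succ]

lemma Homotopic.pad {x y : List A} (h : Homotopic δ i x y) :
    Homotopic δ 0 (pad i x) (Stmt7.pad i y) := by
  fin_cases i
  · exact h
  · exact h.cons 0
  · exact .cons (.cons h 0) 0

lemma Homotopic.pad_rev {x y : List A} (h : Homotopic δ 0 x y) :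
    Homotopic δ (i + 1) (Stmt7.pad i.rev x) (Stmt7.pad i.rev y) := by
  fin_cases i
  · exact .cons (i := 1) (.cons h 0) 0
  · exact .cons (i := 2) h 0
  · exact h

lemma Homotopic.of_pad (H : IsPlanar δ) {x y : List A}
    (h : Homotopic δ 0 (Stmt7.pad i x) (Stmt7.pad i y)) : Homotopic δ i x y := by
  fin_cases i
  · exact h
  · exact h.cancel H
  · exact (h.cancel H).cancel H

namespace StableClass

variable (δ) in
/-- The stable class of a word of type `i`. -/
def mk (i : Fin 3) (w : List A) : StableClass δ := Quotient.mk (stableSetoid δ) (pad i w)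

lemma mk_eq_mk_of_homotopic {x y : List A} (h : Homotopic δ i x y) : mk δ i x = mk δ i y :=
  Quotient.sound (s := stableSetoid δ) ⟨0, 0, h.pad⟩

lemma mk_succ (i : Fin 3) (w : List A) : mk δ (i + 1) w = mk δ i (0 :: w) := by
  fin_cases i
  · rfl
  · rfl
  · exact Quotient.sound (s := stableSetoid δ) ⟨1, 0, .refl _⟩

lemma mk_garside (w : List A) : mk δ i (0 :: 0 :: 0 :: w) = mk δ i w := by
  rw [← mk_succ, ← mk_succ, ← mk_succ, add_three]

lemma exists_eq_mk (i : Fin 3) (y : StableClass δ) : ∃ c x, y = mk δ i (c :: x) := by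
  induction y using Quotient.inductionOn with | h w =>
  change ∃ c x, mk δ 0 w = _
  refine ⟨0, pad i.rev w, ?_⟩
  rw [← mk_garside w]
  fin_cases i <;> rfl

variable (H : IsPlanar δ)
include H

lemma exists_homotopic_of_mk_eq_mk {x y : List A} (h : mk δ i x = mk δ i y) :
    ∃ m n, Homotopic δ i (garside m x) (garside n y) := by
  obtain ⟨m, n, h⟩ := Quotient.exact (s := stableSetoid δ) h
  rw [garside_pad, garside_pad] at h
  exact ⟨m, n, h.of_pad H⟩

/-- The action of `σᵢ^a` on stable classes. -/
def act (i : Fin 3) (a : A) : StableClass δ → StableClass δ :=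
  Quotient.map (fun w => pad i (a :: pad i.rev w)) <| by
    rintro x y ⟨m, n, h⟩
    refine ⟨m, n, ?_⟩
    have hcons (l : ℕ) (w : List A) :
        Homotopic δ 0 (garside l (pad i (a :: pad i.rev w)))
          (pad i (a :: pad i.rev (garside l w))) := by
      rw [garside_pad, ← garside_pad l w]
      exact (Homotopic.garside_cons_comm H l a _).pad
    exact ((hcons m x).trans (h.pad_rev.cons a).pad).trans (hcons n y).symm

lemma act_mk (a c : A) (x : List A) : act H i a (mk δ i (c :: x)) = mk δ i ((a + c) :: x) := by
  have hpad : pad i.rev (pad i (c :: x)) = 0 :: 0 :: c :: x := by fin_cases i <;> rfl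
  calc act H i a (mk δ i (c :: x)) = mk δ i (a :: 0 :: 0 :: c :: x) :=
        congrArg (mk δ i <| a :: ·) hpad
    _ = mk δ i (0 :: 0 :: 0 :: (a + c) :: x) :=
        mk_eq_mk_of_homotopic ((Homotopic.garside_comm H i a c x).trans
          (Homotopic.garside_cons H i _ x).symm)
    _ = mk δ i ((a + c) :: x) := mk_garside _

lemma act_add (a b : A) (y : StableClass δ) : act H i (a + b) y = act H i a (act H i b y) := by
  obtain ⟨c, x, rfl⟩ := exists_eq_mk i y
  rw [act_mk, act_mk, act_mk, add_assoc]

lemma act_zero (y : StableClass δ) : act H i 0 y = y := by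
  obtain ⟨c, x, rfl⟩ := exists_eq_mk i y
  rw [act_mk, zero_add]

/-- The homomorphism `a ↦ σᵢ^a` into the permutations of the stable classes. -/
def actHom (i : Fin 3) : Multiplicative A →* Equiv.Perm (StableClass δ) :=
  MonoidHom.toHomPerm
    { toFun := fun a => act H i a.toAdd
      map_one' := funext (act_zero H)
      map_mul' := fun a b => funext (act_add H a.toAdd b.toAdd) }

lemma act_relation (j : J) (y : StableClass δ) :
    act H 0 (δ 0 j) (act H 1 (δ 1 j) (act H 2 (δ 2 j) y)) = y := by
  obtain ⟨o, ho⟩ := H.exists_eq_zero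
  obtain ⟨c, x, rfl⟩ := exists_eq_mk 0 y
  have htri := Homotopic.detour_cons (δ := δ) 0 0 0 j o (c :: x)
  simp only [detour, zero_add, ho] at htri
  calc act H 0 (δ 0 j) (act H 1 (δ 1 j) (act H 2 (δ 2 j) (mk δ 0 (c :: x))))
      = act H 0 (δ 0 j) (act H 1 (δ 1 j) (act H 2 (δ 2 j) (mk δ 2 (0 :: c :: x)))) := by
        rw [← mk_succ]; rfl
    _ = act H 0 (δ 0 j) (act H 1 (δ 1 j) (mk δ 1 (0 :: δ 2 j :: c :: x))) := by
        rw [act_mk, add_zero, ← mk_succ]; rfl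
    _ = act H 0 (δ 0 j) (mk δ 0 (0 :: δ 1 j :: δ 2 j :: c :: x)) := by
        rw [act_mk, add_zero, ← mk_succ]; rfl
    _ = mk δ 0 (δ 0 j :: δ 1 j :: δ 2 j :: c :: x) := by rw [act_mk, add_zero]
    _ = mk δ 0 (0 :: 0 :: 0 :: c :: x) := mk_eq_mk_of_homotopic htri
    _ = mk δ 0 (c :: x) := mk_garside _

omit H in
variable (i) in
/-- The distance between the base point and the vertex of type `i` determined by `y`. -/
noncomputable def norm (y : StableClass δ) : ℕ :=
  sInf {l | ∃ c x, y = mk δ i (c :: x) ∧ x.length = l}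

omit H in
lemma exists_eq_mk_length_eq_norm (i : Fin 3) (y : StableClass δ) :
    ∃ c x, y = mk δ i (c :: x) ∧ x.length = norm i y :=
  Nat.sInf_mem (s := {l | ∃ c x, y = mk δ i (c :: x) ∧ x.length = l})
    (let ⟨c, x, h⟩ := exists_eq_mk i y; ⟨_, c, x, h, rfl⟩)

omit H in
lemma norm_mk_le (c : A) (x : List A) : norm i (mk δ i (c :: x)) ≤ x.length :=
  Nat.sInf_le ⟨c, x, rfl, rfl⟩

lemma norm_mk_lt_iff {c : A} {x : List A} :
    norm i (mk δ i (c :: x)) < x.length ↔ GarsideDvd δ i (c :: x) := by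
  constructor
  · intro hlt
    obtain ⟨d, u, hmk, hlen⟩ := exists_eq_mk_length_eq_norm i (mk δ i (c :: x))
    rw [← hlen] at hlt
    obtain ⟨m, n, h⟩ := exists_homotopic_of_mk_eq_mk H hmk
    have hmn := h.length_eq
    simp only [length_garside, List.length_cons] at hmn
    obtain ⟨l, rfl⟩ := Nat.exists_eq_add_of_lt (by lia : m < n)
    rw [add_assoc, garside_add] at h
    have hc := h.garside_cancel H
    exact ⟨d, garside l u, hc.trans (.garside (.garside_cons_comm H l d u) 1)⟩
  · rintro ⟨d, u, h⟩
    have hlen := h.length_eq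
    simp only [List.length_cons] at hlen
    have hle := norm_mk_le (δ := δ) (i := i) d u
    rw [mk_eq_mk_of_homotopic h, mk_garside]
    lia

lemma norm_act (a : A) (y : StableClass δ) : norm i (act H i a y) = norm i y := by
  have hle (a : A) (y : StableClass δ) : norm i (act H i a y) ≤ norm i y := by
    obtain ⟨c, x, rfl, hx⟩ := exists_eq_mk_length_eq_norm i y
    rw [act_mk, ← hx]
    exact norm_mk_le _ _
  refine (hle a y).antisymm ?_
  simpa only [← act_add, neg_add_cancel, act_zero] using hle (-a) (act H i a y)

/-- The `y i` describe the edges of a triangle, `norm i (y i)` being the distance of its vertex of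
type `i` from the base point, and the words `act H (i + 1) (δ (i + 1) k) (y (i + 1))` belong to the
other triangles on the edge opposite to that vertex. The index is chosen so that the next vertex has
maximal distance. -/
theorem exists_forall_norm_lt (y : Fin 3 → StableClass δ) (j : J)
    (hy : ∀ i, y i = act H (i + 1) (δ (i + 1) j) (y (i + 1))) :
    ∃ i, ∀ k ≠ j, norm i (y i) < norm i (act H (i + 1) (δ (i + 1) k) (y (i + 1))) := by
  obtain ⟨l, hmax⟩ := Finite.exists_max fun i => norm i (y i)
  obtain ⟨m, rfl⟩ : ∃ m, l = m + 1 + 1 := ⟨l + 1, (add_three l).symm⟩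
  refine ⟨m + 1, fun k hk => ?_⟩
  by_contra! hle
  obtain ⟨c, x, hmk, hx⟩ := exists_eq_mk_length_eq_norm (m + 1 + 1) (y (m + 1 + 1))
  have dvd_detour (l : J)
      (hl : norm (m + 1) (act H (m + 1 + 1) (δ (m + 1 + 1) l) (y (m + 1 + 1)))
        ≤ norm (m + 1) (y (m + 1))) : GarsideDvd δ (m + 1) (detour δ m l c x) := by
    rw [hmk, act_mk, mk_succ] at hl
    have hlt := hl.trans_lt (((hmax (m + 1)).trans_eq hx.symm).trans_lt (Nat.lt_succ_self _))
    simpa [detour, add_comm] using ((norm_mk_lt_iff H).1 hlt).add_head H (δ (m + 1) l)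
  have hdvd := GarsideDvd.of_detour H hk (dvd_detour k hle) (dvd_detour j (by rw [← hy]))
  have hlt := (norm_mk_lt_iff H).2 hdvd
  rw [← hmk, hx] at hlt
  exact lt_irrefl _ hlt

end StableClass

end Words

/-! ### The triangle complex of a lattice presentation -/

section Presentation
open Multiplicative

variable {A J G : Type*} [AddCommGroup A] [Group G]

/-- `G` is the free product of three copies of `A`, with structure maps `s i`, modulo the relations
`s 0 (δ 0 j) * s 1 (δ 1 j) * s 2 (δ 2 j) = 1`. The universal property is only required for groups
`K : Type`. -/
structure IsLatticePresentation (δ : Fin 3 → J → A) (s : Fin 3 → Multiplicative A →* G) :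
    Prop where
  relation : ∀ j, s 0 (ofAdd (δ 0 j)) * s 1 (ofAdd (δ 1 j)) * s 2 (ofAdd (δ 2 j)) = 1
  iSup_range : ⨆ i, (s i).range = ⊤
  exists_lift : ∀ (K : Type) [Group K] (f : Fin 3 → Multiplicative A →* K),
    (∀ j, f 0 (ofAdd (δ 0 j)) * f 1 (ofAdd (δ 1 j)) * f 2 (ofAdd (δ 2 j)) = 1) →
      ∃ φ : G →* K, ∀ i, φ.comp (s i) = f i

variable {δ : Fin 3 → J → A} {s : Fin 3 → Multiplicative A →* G}

namespace IsLatticePresentation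

lemma eq_top_of_forall_range_le (P : IsLatticePresentation δ s) {S : Subgroup G}
    (h : ∀ i, (s i).range ≤ S) : S = ⊤ :=
  top_unique (P.iSup_range.ge.trans (iSup_le h))

lemma hom_ext (P : IsLatticePresentation δ s) {K : Type*} [Group K] {φ ψ : G →* K}
    (h : ∀ i, φ.comp (s i) = ψ.comp (s i)) : φ = ψ := by
  have hS : φ.eqLocus ψ = ⊤ := P.eq_top_of_forall_range_le <| by
    rintro i _ ⟨a, rfl⟩
    exact DFunLike.congr_fun (h i) a
  exact MonoidHom.eq_of_eqOn_top fun g _ => (hS ▸ Subgroup.mem_top g : g ∈ φ.eqLocus ψ)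

lemma apply_eq_apply_one (P : IsLatticePresentation δ s) {B : Type*} {f : G → B}
    (hf : ∀ g i a, f (g * s i a) = f g) (g : G) : f g = f 1 := by
  let S : Subgroup G :=
    { carrier := {h | ∀ g, f (g * h) = f g}
      one_mem' := fun g => by rw [mul_one]
      mul_mem' := fun ha hb g => by rw [← mul_assoc, hb, ha]
      inv_mem' := fun {a} ha g => by rw [← ha (g * a⁻¹), inv_mul_cancel_right] }
  have hS : S = ⊤ := P.eq_top_of_forall_range_le <| by
    rintro i _ ⟨a, rfl⟩ g
    exact hf g i a
  have hg : g ∈ S := hS ▸ Subgroup.mem_top g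
  simpa using hg 1

end IsLatticePresentation

variable (δ s) in
/-- The edge of type `i` of the triangle `x`. Triangles are pairs of the index of a relation
and a group element, and edges of each type are group elements. -/
def panelBase (i : Fin 3) (x : (_ : J) × G) : G :=
  x.2 * ![1, s 1 (ofAdd (δ 1 x.1)), (s 0 (ofAdd (δ 0 x.1)))⁻¹] i

lemma panelBase_smul (i : Fin 3) (g : G) (x : (_ : J) × G) :
    panelBase δ s i (g • x) = g * panelBase δ s i x :=
  mul_assoc ..

lemma IsLatticePresentation.panelBase_add_one (P : IsLatticePresentation δ s) (i : Fin 3)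
    (x : (_ : J) × G) :
    panelBase δ s (i + 1) x = panelBase δ s i x * s (i + 1) (ofAdd (δ (i + 1) x.1)) := by
  fin_cases i
  · simp [panelBase]
  · have hrel := P.relation x.1
    rw [mul_assoc] at hrel
    simp [panelBase, mul_assoc, inv_eq_of_mul_eq_one_right hrel]
  · simp [panelBase]

lemma panelBase_injective_of_fst_eq {i : Fin 3} {x y : (_ : J) × G} (hfst : x.1 = y.1)
    (h : panelBase δ s i x = panelBase δ s i y) : x = y := by
  obtain ⟨j, g⟩ := x
  obtain ⟨k, g'⟩ := y
  obtain rfl : j = k := hfst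
  exact congrArg (Sigma.mk j) (mul_right_cancel h)

end Presentation

lemma injective_of_triangular {R X N M α : Type*} [Ring R] [AddCommGroup N] [Module R N]
    [AddCommGroup M] [Module R M] [LinearOrder α] (b : Module.Basis X R N) (f : N →ₗ[R] M)
    (h : X → α) (hf : ∀ x, ∃ l : M →ₗ[R] R, l (f (b x)) = 1 ∧
      ∀ y ≠ x, h y ≤ h x → l (f (b y)) = 0) : Function.Injective f := by
  rw [injective_iff_map_eq_zero]
  intro z hz
  by_contra hne
  obtain ⟨x, hx, hmax⟩ := Finset.exists_max_image (b.repr z).support h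
    (Finsupp.support_nonempty_iff.2 (b.repr.map_ne_zero_iff.2 hne))
  obtain ⟨l, hlx, hly⟩ := hf x
  have hcoeff : l (f z) = b.repr z x := by
    conv_lhs => rw [← b.linearCombination_repr z, Finsupp.linearCombination_apply, Finsupp.sum]
    simp only [map_sum, map_smul]
    rw [Finset.sum_eq_single_of_mem x hx fun y hy hyx => by rw [hly y hyx (hmax y hy), smul_zero],
      hlx, smul_eq_mul, mul_one]
  rw [hz, map_zero] at hcoeff
  exact Finsupp.mem_support_iff.1 hx hcoeff.symm

section Morse
open Multiplicative

variable {A J G : Type} [AddCommGroup A] [Group G] {δ : Fin 3 → J → A}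
  {s : Fin 3 → Multiplicative A →* G}

lemma exists_height (H : IsPlanar δ) (P : IsLatticePresentation δ s) :
    ∃ h : (_ : J) × G → ℕ, ∀ x, ∃ i, ∀ y ≠ x, panelBase δ s i y = panelBase δ s i x →
      h x < h y := by
  obtain ⟨φ, hφ⟩ := P.exists_lift _ (StableClass.actHom H) fun j => Equiv.ext
    (StableClass.act_relation H j)
  let y (x : (_ : J) × G) (i : Fin 3) : StableClass δ :=
    φ (panelBase δ s i x)⁻¹ (StableClass.mk δ 0 [])
  have hy (x i) : y x i = StableClass.act H (i + 1) (δ (i + 1) x.1) (y x (i + 1)) := by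
    change _ = StableClass.actHom H (i + 1) (ofAdd (δ (i + 1) x.1)) (y x (i + 1))
    rw [← hφ, MonoidHom.comp_apply, ← Equiv.Perm.mul_apply, ← map_mul, P.panelBase_add_one,
      mul_inv_rev, mul_inv_cancel_left]
  have hnorm (x i) : StableClass.norm (i + 1) (y x i) = StableClass.norm (i + 1) (y x (i + 1)) := by
    rw [hy, StableClass.norm_act]
  refine ⟨fun x => ∑ i, StableClass.norm i (y x i), fun x => ?_⟩
  obtain ⟨i, hi⟩ := StableClass.exists_forall_norm_lt H (y x) x.1 (hy x)
  refine ⟨i + 1, fun x' hne hpanel => ?_⟩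
  have heq : y x' (i + 1) = y x (i + 1) := by simp only [y, hpanel]
  have hlt := hi x'.1 fun h => hne (panelBase_injective_of_fst_eq h hpanel)
  rw [← heq, ← hy] at hlt
  have h₂ : StableClass.norm (i + 1 + 1) (y x' (i + 1 + 1)) =
      StableClass.norm (i + 1 + 1) (y x (i + 1 + 1)) := by rw [← hnorm, ← hnorm, heq]
  have hsum (f : Fin 3 → ℕ) : ∑ k, f k = f i + f (i + 1) + f (i + 1 + 1) := by
    fin_cases i <;> simp [Fin.sum_univ_three] <;> ring
  simp only [hsum, heq, h₂]
  omega

end Morse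

section ChainComplex
open CategoryTheory Multiplicative MonoidAlgebra

variable {A J G : Type} [AddCommGroup A] [Group G] (R : Type) [CommRing R] (δ : Fin 3 → J → A)
  (s : Fin 3 → Multiplicative A →* G)

/-- The coset of `g` modulo the image of `s i`, as a vertex of type `i` of the triangle complex. -/
def vertex (i : Fin 3) (g : G) : Σ i, G ⧸ (s i).range :=
  ⟨i, g⟩

lemma smul_vertex (i : Fin 3) (g h : G) : g • vertex s i h = vertex s i (g * h) :=
  rfl

lemma vertex_mul (i : Fin 3) (g : G) (a : Multiplicative A) :
    vertex s i (g * s i a) = vertex s i g :=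
  congrArg (Sigma.mk i) (QuotientGroup.mk_mul_of_mem g ⟨a, rfl⟩)

/-- The boundary map from triangles to edges. -/
noncomputable def boundary₂ :
    Rep.ofMulAction R G ((_ : J) × G) ⟶ Rep.ofMulAction R G ((_ : Fin 3) × G) :=
  liftOfMulAction _ (fun x => ∑ i, single ⟨i, panelBase δ s i x⟩ 1) fun g x => by
    simp only [map_sum, Representation.ofMulAction_single, panelBase_smul]
    rfl

/-- The boundary map from edges to vertices, the edge `g` of type `i` leading from
`vertex s i g` to `vertex s (i + 1) g`. -/
noncomputable def boundary₁ : Rep.ofMulAction R G ((_ : Fin 3) × G) ⟶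
    Rep.ofMulAction R G (Σ i, G ⧸ (s i).range) :=
  liftOfMulAction _ (fun p => single (vertex s (p.1 + 1) p.2) 1 - single (vertex s p.1 p.2) 1)
    fun g p => by
      simp only [map_sub, Representation.ofMulAction_single]
      rfl

/-- The augmentation `R[X] ⟶ R` of a permutation module. -/
noncomputable def augmentation (G X : Type) [Group G] [MulAction G X] :
    Rep.ofMulAction R G X ⟶ Rep.trivial R G R :=
  liftOfMulAction _ (fun _ => (1 : R)) fun _ _ => rfl

lemma boundary₂_single (x : (_ : J) × G) :
    (boundary₂ R δ s).hom (single x 1 : R[(_ : J) × G]) = ∑ i, single ⟨i, panelBase δ s i x⟩ 1 :=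
  liftOfMulAction_single ..

lemma boundary₁_single (i : Fin 3) (g : G) :
    (boundary₁ R s).hom (single ⟨i, g⟩ 1 : R[(_ : Fin 3) × G]) =
      single (vertex s (i + 1) g) 1 - single (vertex s i g) 1 :=
  liftOfMulAction_single ..

lemma augmentation_single {X : Type} [MulAction G X] (x : X) :
    (augmentation R G X).hom (single x 1 : R[X]) = (1 : R) :=
  liftOfMulAction_single ..

variable {δ s}

lemma boundary₂_boundary₁ (P : IsLatticePresentation δ s) :
    boundary₂ R δ s ≫ boundary₁ R s = 0 := by
  refine hom_ofMulAction_ext fun x => ?_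
  change (boundary₁ R s).hom ((boundary₂ R δ s).hom (single x 1)) = 0
  have hpanel (i) : (boundary₁ R s).hom (single ⟨i, panelBase δ s i x⟩ 1) =
      single (vertex s (i + 1) (panelBase δ s (i + 1) x)) 1 -
        single (vertex s i (panelBase δ s i x)) 1 := by
    rw [boundary₁_single, P.panelBase_add_one, vertex_mul]
  rw [boundary₂_single, map_sum]
  refine (Finset.sum_congr rfl fun i _ => hpanel i).trans ?_
  rw [Finset.sum_sub_distrib, sub_eq_zero]
  exact Equiv.sum_comp (Equiv.addRight 1) fun i => single (vertex s i (panelBase δ s i x)) 1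

variable (s) in
lemma boundary₁_augmentation : boundary₁ R s ≫ augmentation R G _ = 0 := by
  refine hom_ofMulAction_ext fun ⟨i, g⟩ => ?_
  change (augmentation R G _).hom ((boundary₁ R s).hom (single ⟨i, g⟩ 1)) = 0
  rw [boundary₁_single, map_sub, augmentation_single, augmentation_single, sub_self]

instance epi_augmentation (X : Type) [MulAction G X] [Nonempty X] : Epi (augmentation R G X) := by
  refine (Rep.epi_iff_surjective _).2 fun r => ⟨r • single (Classical.arbitrary X) 1, ?_⟩
  rw [map_smul, augmentation_single]
  exact mul_one r

lemma mono_boundary₂ (H : IsPlanar δ) (P : IsLatticePresentation δ s) : Mono (boundary₂ R δ s) := by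
  classical
  obtain ⟨h, hh⟩ := exists_height H P
  refine (Rep.mono_iff_injective _).2 <|
    injective_of_triangular (basis _ R) (boundary₂ R δ s).hom.toLinearMap h fun x => ?_
  obtain ⟨i, hi⟩ := hh x
  have hcoord (y : (_ : J) × G) : (basis _ R).coord ⟨i, panelBase δ s i x⟩
      ((boundary₂ R δ s).hom.toLinearMap (basis _ R y)) =
        if panelBase δ s i y = panelBase δ s i x then 1 else 0 := by
    rw [basis_apply]
    refine (congrArg _ (boundary₂_single R δ s y)).trans ?_
    rw [map_sum]
    simp only [basis_coord_single, Sigma.mk.injEq, heq_eq_eq]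
    rw [Finset.sum_eq_single_of_mem i (Finset.mem_univ i)
      fun k _ hk => if_neg fun h => hk h.1]
    simp only [true_and]
  refine ⟨(basis _ R).coord ⟨i, panelBase δ s i x⟩, by rw [hcoord, if_pos rfl], fun y hne hle => ?_⟩
  rw [hcoord, if_neg fun heq => (hi y hne heq).not_ge hle]

lemma exact_boundary₁_augmentation (P : IsLatticePresentation δ s) :
    (ShortComplex.mk _ _ (boundary₁_augmentation R s)).Exact := by
  let π := (LinearMap.range (boundary₁ R s).hom.toLinearMap).mkQ
  have hpanel (i g) : π (single (vertex s (i + 1) g) 1) = π (single (vertex s i g) 1) :=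
    (Submodule.Quotient.eq _).2 ⟨_, boundary₁_single R s i g⟩
  have hzero (i g) : π (single (vertex s i g) 1) = π (single (vertex s 0 g) 1) := by
    fin_cases i
    · rfl
    · exact hpanel 0 g
    · exact (hpanel 1 g).trans (hpanel 0 g)
  have hone (g) : π (single (vertex s 0 g) 1) = π (single (vertex s 0 1) 1) :=
    P.apply_eq_apply_one (f := fun g => π (single (vertex s 0 g) 1))
      (fun g i a => by rw [← hzero i, vertex_mul, hzero]) g
  have hπ : π = LinearMap.toSpanSingleton R _ (π (single (vertex s 0 1) 1)) ∘ₗ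
      (augmentation R G _).hom.toLinearMap := (basis _ R).ext <| by
    rintro ⟨i, g⟩
    induction g using QuotientGroup.induction_on with | H g
    rw [basis_apply]
    calc π (single (vertex s i g) 1)
      _ = (1 : R) • π (single (vertex s 0 1) 1) := by rw [hzero, hone, one_smul]
      _ = _ := congrArg (· • π (single (vertex s 0 1) 1))
        (augmentation_single R (vertex s i g)).symm
  refine rep_exact_iff.2 fun x hx => ?_
  have hx' : π x = 0 := by
    rw [hπ]
    exact (congrArg (· • π (single (vertex s 0 1) 1)) hx).trans (zero_smul R _)
  exact (Submodule.Quotient.mk_eq_zero _).1 hx'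

end ChainComplex

section AffineAction
open CategoryTheory Multiplicative MonoidAlgebra

variable {A J G R : Type} [AddCommGroup A] [Group G] [CommRing R] {δ : Fin 3 → J → A}
  {s : Fin 3 → Multiplicative A →* G} {W : Rep.{0} R G}

variable (W) in
/-- The affine action of `G` on the representation `W` with linear part `W.ρ` fixing `v`. -/
def affineActionFixing (v : W) : G →* Equiv.Perm W :=
  (MulAut.conj (Equiv.addRight v)).toMonoidHom.comp <|
    (MulAction.toPermHom (Module.End R W)ˣ W).comp (MonoidHom.toHomUnits W.ρ)

lemma affineActionFixing_apply (v w : W) (g : G) :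
    affineActionFixing W v g w = W.ρ g (w - v) + v := by
  rw [sub_eq_add_neg]
  rfl

lemma IsLatticePresentation.map_sub_map (P : IsLatticePresentation δ s) {φ : G →* Equiv.Perm W}
    (hφ : ∀ i a w w', φ (s i a) w - φ (s i a) w' = W.ρ (s i a) (w - w')) (g : G) (w w' : W) :
    φ g w - φ g w' = W.ρ g (w - w') := by
  let S : Subgroup G :=
    { carrier := {g | ∀ w w', φ g w - φ g w' = W.ρ g (w - w')}
      one_mem' := fun w w' => by
        simp only [map_one, Equiv.Perm.one_apply, Module.End.one_apply]
      mul_mem' := fun ha hb w w' => by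
        simp only [map_mul, Equiv.Perm.mul_apply, ha _ _, hb _ _, Module.End.mul_apply]
      inv_mem' := fun {g} hg w w' => by
        rw [← W.ρ.inv_self_apply g (φ g⁻¹ w - φ g⁻¹ w'), ← hg]
        simp only [← Equiv.Perm.mul_apply, ← map_mul, mul_inv_cancel, map_one,
          Equiv.Perm.one_apply] }
  have hS : S = ⊤ := P.eq_top_of_forall_range_le <| by
    rintro i _ ⟨a, rfl⟩
    exact hφ i a
  exact (hS ▸ Subgroup.mem_top g : g ∈ S) w w'

lemma IsLatticePresentation.exists_affineAction (P : IsLatticePresentation δ s)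
    (v : Fin 3 → W) (hv : ∀ j, W.ρ (s 0 (ofAdd (δ 0 j))) (v 1 - v 0) +
      W.ρ (s 0 (ofAdd (δ 0 j)) * s 1 (ofAdd (δ 1 j))) (v 2 - v 1) + (v 0 - v 2) = 0) :
    ∃ φ : G →* Equiv.Perm W, (∀ i a, φ (s i a) (v i) = v i) ∧
      ∀ g w w', φ g w - φ g w' = W.ρ g (w - w') := by
  obtain ⟨φ, hφ⟩ := P.exists_lift _ (fun i => (affineActionFixing W (v i)).comp (s i)) fun j =>
    Equiv.ext fun w => by
      have hw : W.ρ (s 0 (ofAdd (δ 0 j)) * s 1 (ofAdd (δ 1 j)) * s 2 (ofAdd (δ 2 j))) (w - v 2) =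
          w - v 2 := by rw [P.relation j, map_one, Module.End.one_apply]
      have hvj := hv j
      simp only [map_mul, Module.End.mul_apply, map_sub] at hw hvj
      simp only [Equiv.Perm.mul_apply, MonoidHom.comp_apply, affineActionFixing_apply, map_add,
        map_sub, Equiv.Perm.one_apply]
      linear_combination (norm := module) hw + hvj
  have hφs (i a w) : φ (s i a) w = W.ρ (s i a) (w - v i) + v i :=
    (DFunLike.congr_fun (DFunLike.congr_fun (hφ i) a) w).trans (affineActionFixing_apply ..)
  refine ⟨φ, fun i a => by rw [hφs, sub_self, map_zero, zero_add], P.map_sub_map ?_⟩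
  intro i a w w'
  rw [hφs, hφs, add_sub_add_right_eq_sub, ← map_sub, sub_sub_sub_cancel_right]

lemma exists_linearMap_vertex {M : Type*} [AddCommGroup M] [Module R M] {φ : G →* Equiv.Perm M}
    {v : Fin 3 → M} (hv : ∀ i a, φ (s i a) (v i) = v i) :
    ∃ Φ : R[Σ i, G ⧸ (s i).range] →ₗ[R] M, ∀ i g, Φ (single (vertex s i g) 1) = φ g (v i) :=
  ⟨(basis _ R).constr R fun p =>
    Quotient.liftOn' p.2 (fun g => φ g (v p.1)) fun g h hgh => by
      obtain ⟨a, ha⟩ := QuotientGroup.leftRel_apply.1 hgh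
      rw [← mul_inv_cancel_left g h, ← ha, map_mul, Equiv.Perm.mul_apply, hv],
    fun _ _ => constr_basis_single _ _⟩

lemma exists_comp_boundary₁_eq (P : IsLatticePresentation δ s) {o : J} (ho : ∀ i, δ i o = 0)
    (f : Rep.ofMulAction R G ((_ : Fin 3) × G) ⟶ W) (hf : boundary₂ R δ s ≫ f = 0) :
    ∃ Φ : R[Σ i, G ⧸ (s i).range] →ₗ[R] W, ∀ x, Φ ((boundary₁ R s).hom x) = f.hom x := by
  let e (i : Fin 3) : W := f.hom (single ⟨i, 1⟩ 1)
  have hfe (i g) : f.hom (single ⟨i, g⟩ 1) = W.ρ g (e i) := by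
    rw [← Rep.hom_comm_apply]
    refine congrArg f.hom (Eq.trans ?_ (Representation.ofMulAction_single g _ _).symm)
    rw [Sigma.smul_mk, smul_eq_mul, mul_one]
  have hsum (x) : ∑ i, W.ρ (panelBase δ s i x) (e i) = 0 := by
    have hx : f.hom ((boundary₂ R δ s).hom (single x 1)) = 0 :=
      congrArg (fun h => h.hom (single x 1 : R[(_ : J) × G])) hf
    rw [boundary₂_single, map_sum] at hx
    exact (Finset.sum_congr rfl fun i _ => (hfe i _).symm).trans hx
  have he : e 0 + e 1 + e 2 = 0 := by
    simpa [Fin.sum_univ_three, panelBase, ho] using hsum ⟨o, 1⟩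
  let v : Fin 3 → W := ![0, e 0, e 0 + e 1]
  have hv (i) : v (i + 1) - v i = e i := by
    fin_cases i
    · exact sub_zero _
    · exact add_sub_cancel_left _ _
    · exact (zero_sub _).trans (neg_eq_of_add_eq_zero_right he)
  obtain ⟨φ, hφv, hφ⟩ := P.exists_affineAction v fun j => by
    have hv₀ : v 1 - v 0 = e 0 := hv 0
    have hv₁ : v 2 - v 1 = e 1 := hv 1
    have hv₂ : v 0 - v 2 = e 2 := hv 2
    rw [hv₀, hv₁, hv₂]
    simpa [Fin.sum_univ_three, panelBase] using hsum ⟨j, s 0 (ofAdd (δ 0 j))⟩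
  obtain ⟨Φ, hΦ⟩ := exists_linearMap_vertex (R := R) hφv
  have hΦf : Φ ∘ₗ (boundary₁ R s).hom.toLinearMap = f.hom.toLinearMap := (basis _ R).ext <| by
    rintro ⟨i, g⟩
    rw [basis_apply]
    refine (congrArg Φ (boundary₁_single R s i g)).trans ?_
    rw [map_sub, hΦ, hΦ, hφ, hv]
    exact (hfe i g).symm
  exact ⟨Φ, LinearMap.congr_fun hΦf⟩

lemma exact_boundary₂_boundary₁ (P : IsLatticePresentation δ s) {o : J} (ho : ∀ i, δ i o = 0) :
    (ShortComplex.mk _ _ (boundary₂_boundary₁ R P)).Exact := by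
  obtain ⟨Φ, hΦ⟩ := exists_comp_boundary₁_eq P ho (Limits.cokernel.π (boundary₂ R δ s))
    (Limits.cokernel.condition _)
  have hexact := rep_exact_iff.1 (ShortComplex.exact_cokernel (boundary₂ R δ s))
  refine rep_exact_iff.2 fun x hx => hexact x ((hΦ x).symm.trans ?_)
  exact (congrArg Φ hx).trans (map_zero Φ)

end AffineAction

/-! ### Homology of the lattice -/

section Acyclicity
open CategoryTheory Multiplicative Limits

variable {A J G : Type} [AddCommGroup A] [Group G] {R : Type} [CommRing R]

lemma stabilizer_sigma_self (x : (_ : J) × G) : MulAction.stabilizer G x = ⊥ := by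
  refine (Subgroup.eq_bot_iff_forall _).2 fun g hg => ?_
  exact mul_eq_right.1 (eq_of_heq (Sigma.ext_iff.1 (MulAction.mem_stabilizer_iff.1 hg)).2)

variable (R G J) in
lemma isZero_groupHomology_ofMulAction_sigma_self (n : ℕ) :
    IsZero (groupHomology (Rep.ofMulAction R G ((_ : J) × G)) (n + 1)) :=
  have (x : (_ : J) × G) : Finite (MulAction.stabilizer G x) := by
    rw [stabilizer_sigma_self]
    infer_instance
  isZero_groupHomology_ofMulAction_succ (fun x => by simp [stabilizer_sigma_self]) n

lemma stabilizer_vertex (s : Fin 3 → Multiplicative A →* G) (i : Fin 3) (g : G) :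
    MulAction.stabilizer G (vertex s i g) = (s i).range.map (MulAut.conj g).toMonoidHom := by
  have hone : MulAction.stabilizer G (vertex s i 1) = (s i).range := by
    ext h
    rw [MulAction.mem_stabilizer_iff, smul_vertex, mul_one, vertex, vertex, Sigma.mk.injEq]
    refine (and_iff_right rfl).trans (heq_iff_eq.trans ?_)
    rw [eq_comm, QuotientGroup.eq, inv_one, one_mul]
  rw [← hone, ← MulAction.stabilizer_smul_eq_stabilizer_map_conj, smul_vertex, mul_one]

lemma isZero_groupHomology_ofMulAction_vertex [Finite A] (hA : IsUnit (Nat.card A : R))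
    (s : Fin 3 → Multiplicative A →* G) (n : ℕ) :
    IsZero (groupHomology (Rep.ofMulAction R G (Σ i, G ⧸ (s i).range)) (n + 1)) := by
  have hstab (x : Σ i, G ⧸ (s i).range) : ∃ i g, MulAction.stabilizer G x =
      (s i).range.map (MulAut.conj g).toMonoidHom := by
    obtain ⟨i, x⟩ := x
    obtain ⟨g, rfl⟩ := QuotientGroup.mk_surjective x
    exact ⟨i, g, stabilizer_vertex s i g⟩
  have hfin (x : Σ i, G ⧸ (s i).range) : Finite (MulAction.stabilizer G x) := by
    obtain ⟨i, g, hx⟩ := hstab x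
    rw [hx, MonoidHom.map_range]
    exact Set.finite_range _
  refine isZero_groupHomology_ofMulAction_succ (fun x => ?_) n
  obtain ⟨i, g, hx⟩ := hstab x
  refine isUnit_of_dvd_unit (Nat.cast_dvd_cast ?_) hA
  rw [hx, MonoidHom.map_range, ← Nat.card_congr toAdd]
  exact Subgroup.card_range_dvd _

end Acyclicity

section LowDegree
open CategoryTheory Multiplicative MonoidAlgebra Limits TensorProduct

variable {A J G : Type} [AddCommGroup A] [Group G] {R : Type} [CommRing R] {δ : Fin 3 → J → A}
  {s : Fin 3 → Multiplicative A →* G}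

/-- The sum of the coefficients. -/
noncomputable def sumCoeff (R J : Type) [CommRing R] : (J →₀ R) →ₗ[R] R :=
  Finsupp.linearCombination R fun _ => 1

variable (R δ s) in
lemma coinvariantsMap_boundary₂ (c) : coinvariantsSigmaEquiv R G (fun _ : Fin 3 => G)
      (Representation.Coinvariants.map _ _ (boundary₂ R δ s).hom c) =
    ∑ i, Finsupp.single i (sumCoeff R J (coinvariantsSigmaEquiv R G (fun _ => G) c)) := by
  suffices (coinvariantsSigmaEquiv R G (fun _ : Fin 3 => G)).toLinearMap ∘ₗ
      Representation.Coinvariants.map _ _ (boundary₂ R δ s).hom =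
    (∑ i, Finsupp.lsingle i) ∘ₗ sumCoeff R J ∘ₗ
      (coinvariantsSigmaEquiv R G fun _ : J => G).toLinearMap by
    simpa using LinearMap.congr_fun this c
  refine Representation.Coinvariants.hom_ext <| (basis _ R).ext fun x => ?_
  rw [basis_apply]
  change coinvariantsSigmaEquiv R G (fun _ : Fin 3 => G)
    (Representation.Coinvariants.mk _ ((boundary₂ R δ s).hom (single x 1))) =
      (∑ i, Finsupp.lsingle i) (sumCoeff R J (coinvariantsSigmaEquiv R G (fun _ => G)
        (Representation.Coinvariants.mk _ (single x 1))))
  rw [boundary₂_single, coinvariantsSigmaEquiv_mk_single, map_sum, map_sum]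
  simp [coinvariantsSigmaEquiv_mk_single, sumCoeff]

variable (R δ s) in
lemma ker_coinvariantsMap_boundary₂ :
    LinearMap.ker (Representation.Coinvariants.map _ _ (boundary₂ R δ s).hom) =
      (LinearMap.ker (sumCoeff R J)).comap
        (coinvariantsSigmaEquiv R G fun _ : J => G).toLinearMap := by
  ext c
  rw [LinearMap.mem_ker, Submodule.mem_comap, LinearMap.mem_ker, LinearEquiv.coe_coe,
    ← LinearEquiv.map_eq_zero_iff (coinvariantsSigmaEquiv R G _), coinvariantsMap_boundary₂]
  refine ⟨fun h => ?_, fun h => by simp [h]⟩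
  simpa [Finsupp.single_apply] using DFunLike.congr_fun h 0

/-- The second homology of `G`, computed from the triangles of the complex modulo `G`: all three
entries of their boundary are the sum of the coefficients. -/
noncomputable def groupHomologyTwoEquiv [Finite A] (hA : IsUnit (Nat.card A : R))
    (H : IsPlanar δ) (P : IsLatticePresentation δ s) :
    groupHomology (Rep.trivial R G R) 2 ≃ₗ[R] LinearMap.ker (sumCoeff R J) :=
  have := mono_boundary₂ R H P
  groupHomologyTwoEquivKer (exact_boundary₂_boundary₁ P H.exists_eq_zero.choose_spec)
      (exact_boundary₁_augmentation R P) (isZero_groupHomology_ofMulAction_sigma_self (Fin 3) G R)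
      (isZero_groupHomology_ofMulAction_vertex hA s) ≪≫ₗ
    LinearEquiv.ofEq _ _ (ker_coinvariantsMap_boundary₂ R δ s) ≪≫ₗ
    (coinvariantsSigmaEquiv R G fun _ : J => G).ofSubmodule' _

lemma isZero_groupHomology_trivial_add_three [Finite A] (hA : IsUnit (Nat.card A : R))
    (H : IsPlanar δ) (P : IsLatticePresentation δ s) (n : ℕ) :
    IsZero (groupHomology (Rep.trivial R G R) (n + 3)) :=
  have := mono_boundary₂ R H P
  isZero_groupHomology_add_three (exact_boundary₂_boundary₁ P H.exists_eq_zero.choose_spec)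
    (exact_boundary₁_augmentation R P) (isZero_groupHomology_ofMulAction_sigma_self J G R)
    (isZero_groupHomology_ofMulAction_sigma_self (Fin 3) G R)
    (fun n => isZero_groupHomology_ofMulAction_vertex hA s n) n

lemma IsLatticePresentation.abelianization_pow_card (P : IsLatticePresentation δ s)
    (x : Abelianization G) : x ^ Nat.card A = 1 := by
  suffices powMonoidHom (Nat.card A) = (1 : Abelianization G →* Abelianization G) from
    DFunLike.congr_fun this x
  refine Abelianization.hom_ext _ _ (P.hom_ext fun i => MonoidHom.ext fun a => ?_)
  have ha : a ^ Nat.card A = 1 := by rw [Nat.card_congr (ofAdd (α := A)), pow_card_eq_one']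
  simp only [MonoidHom.comp_apply, powMonoidHom_apply, ← map_pow, ha, map_one]
  rfl

lemma isZero_groupHomology_trivial_one (hA : IsUnit (Nat.card A : R))
    (P : IsLatticePresentation δ s) : IsZero (groupHomology (Rep.trivial R G R) 1) := by
  have htensor (x : Additive (Abelianization G) ⊗[ℤ] Rep.trivial R G R) : x = 0 := by
    induction x with
    | zero => rfl
    | add x y hx hy => rw [hx, hy, add_zero]
    | tmul a r =>
      obtain ⟨r, rfl⟩ : ∃ r' : Rep.trivial R G R, Nat.card A • r' = r := by
        refine ⟨(↑hA.unit⁻¹ : R) • r, ?_⟩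
        rw [← Nat.cast_smul_eq_nsmul R, smul_smul, hA.mul_val_inv, one_smul]
      have ha : Nat.card A • a = 0 := P.abelianization_pow_card a.toMul
      rw [← TensorProduct.smul_tmul, ha, TensorProduct.zero_tmul]
  exact ModuleCat.isZero_iff_subsingleton.2 <|
    (groupHomology.H1AddEquivOfIsTrivial (Rep.trivial R G R)).toEquiv.subsingleton_congr.2
      (subsingleton_of_forall_eq 0 htensor)

lemma sumCoeff_fin_succ {q : ℕ} (x : Fin (q + 1) →₀ R) :
    sumCoeff R (Fin (q + 1)) x = x 0 + ∑ j : Fin q, x j.succ := by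
  rw [sumCoeff, Finsupp.linearCombination_apply,
    Finsupp.sum_fintype _ _ fun _ => zero_smul R (1 : R), Fin.sum_univ_succ]
  simp only [smul_eq_mul, mul_one]

/-- A family with sum zero is determined by its entries other than the zeroth. -/
noncomputable def kerSumCoeffEquiv (R : Type) [CommRing R] (q : ℕ) :
    LinearMap.ker (sumCoeff R (Fin (q + 1))) ≃ₗ[R] (Fin q → R) :=
  .ofBijective (LinearMap.pi (fun j => Finsupp.lapply j.succ) ∘ₗ Submodule.subtype _) <| by
    constructor
    · refine (injective_iff_map_eq_zero _).2 fun ⟨x, hx⟩ h => Subtype.ext (Finsupp.ext ?_)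
      have hsucc (j : Fin q) : x j.succ = 0 := congrFun h j
      have hzero : x 0 = 0 := by
        simpa only [LinearMap.mem_ker, sumCoeff_fin_succ, hsucc, Finset.sum_const_zero, add_zero]
          using hx
      exact Fin.cases hzero hsucc
    · refine fun v => ⟨⟨Finsupp.equivFunOnFinite.symm (Fin.cons (-∑ j, v j) v), ?_⟩, rfl⟩
      rw [LinearMap.mem_ker, sumCoeff_fin_succ]
      exact neg_add_cancel _

end LowDegree

section Singer
open Multiplicative

variable {q : ℕ} {δ : Fin 3 → Fin (q + 1) → ZMod (q ^ 2 + q + 1)}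

lemma IsPlanar.of_isPlanarDifferenceSet (hinj : ∀ i, Function.Injective (δ i))
    (h0 : ∀ i, δ i 0 = 0) (hpds : ∀ i, IsPlanarDifferenceSet q (Set.range (δ i))) :
    IsPlanar δ where
  exists_eq_zero := ⟨0, h0⟩
  exists_sub_eq i d hd := by
    obtain ⟨⟨_, _⟩, ⟨⟨⟨j, rfl⟩, ⟨k, rfl⟩⟩, h⟩, -⟩ := (hpds i).2 d hd
    exact ⟨j, k, h⟩
  eq_of_sub_eq_sub {i j k j' k'} hne h := by
    obtain ⟨_, -, hunique⟩ := (hpds i).2 _ (sub_ne_zero.2 ((hinj i).ne hne))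
    have heq := (hunique (δ i j, δ i k) ⟨⟨⟨j, rfl⟩, ⟨k, rfl⟩⟩, rfl⟩).trans
      (hunique (δ i j', δ i k') ⟨⟨⟨j', rfl⟩, ⟨k', rfl⟩⟩, h.symm⟩).symm
    exact ⟨hinj i (Prod.ext_iff.1 heq).1, hinj i (Prod.ext_iff.1 heq).2⟩

/-- The homomorphism `a ↦ x ^ a` defined on `ZMod n` by an element `x` with `x ^ n = 1`. -/
def zmodPowHom {K : Type*} [Group K] {n : ℕ} [NeZero n] {x : K} (hx : x ^ n = 1) :
    Multiplicative (ZMod n) →* K :=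
  MonoidHom.mk' (fun a => x ^ a.toAdd.val) fun a b => by
    rw [← pow_add, toAdd_mul, ZMod.val_add, ← pow_eq_pow_mod _ hx]

lemma zmodPowHom_one {K : Type*} [Group K] {n : ℕ} [NeZero n] {x : K} (hx : x ^ n = 1) :
    zmodPowHom hx (ofAdd 1) = x := by
  change x ^ (1 : ZMod n).val = x
  rw [ZMod.val_one_eq_one_mod, ← pow_eq_pow_mod _ hx, pow_one]

lemma map_ofAdd_one_pow_val {K : Type*} [Group K] {n : ℕ} [NeZero n]
    (f : Multiplicative (ZMod n) →* K) (a : ZMod n) : f (ofAdd 1) ^ a.val = f (ofAdd a) := by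
  rw [← map_pow, ← ofAdd_nsmul, nsmul_one, ZMod.natCast_zmod_val]

variable (q δ) in
/-- The generator `σᵢ₊₁` of the paper. -/
def SingerLattice.σ (i : Fin 3) : SingerLattice q δ :=
  PresentedGroup.of (rels := singerRels q δ) i

namespace SingerLattice

lemma σ_pow (i : Fin 3) : σ q δ i ^ (q ^ 2 + q + 1) = 1 :=
  PresentedGroup.one_of_mem (rels := singerRels q δ) (x := FreeGroup.of i ^ (q ^ 2 + q + 1))
    (Or.inl ⟨i, rfl⟩)

lemma isLatticePresentation :
    IsLatticePresentation δ fun i => zmodPowHom (σ_pow (δ := δ) i) where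
  relation j :=
    PresentedGroup.one_of_mem (rels := singerRels q δ)
      (x := FreeGroup.of 0 ^ (δ 0 j).val * FreeGroup.of 1 ^ (δ 1 j).val *
        FreeGroup.of 2 ^ (δ 2 j).val) (Or.inr ⟨j, rfl⟩)
  iSup_range := top_unique <| (PresentedGroup.closure_range_of (singerRels q δ)).ge.trans <|
    (Subgroup.closure_le _).2 <| by
      rintro _ ⟨i, rfl⟩
      exact Subgroup.mem_iSup_of_mem i ⟨ofAdd 1, zmodPowHom_one (σ_pow i)⟩
  exists_lift K _ f hf := by
    have hrels : ∀ r ∈ singerRels q δ, FreeGroup.lift (fun i => f i (ofAdd 1)) r = 1 := by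
      rintro r (⟨i, rfl⟩ | ⟨j, rfl⟩)
      · rw [map_pow, FreeGroup.lift_apply_of, ← map_pow, ← ofAdd_nsmul, nsmul_one,
          ZMod.natCast_self, ofAdd_zero, map_one]
      · simpa only [map_mul, map_pow, FreeGroup.lift_apply_of, map_ofAdd_one_pow_val] using hf j
    refine ⟨PresentedGroup.toGroup hrels, fun i => MonoidHom.ext fun a => ?_⟩
    change PresentedGroup.toGroup hrels (PresentedGroup.of i ^ a.toAdd.val) = f i a
    rw [map_pow, PresentedGroup.toGroup.of, map_ofAdd_one_pow_val, ofAdd_toAdd]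

end SingerLattice
end Singer

open CategoryTheory Limits in
theorem statement7_general (R : Type) [CommRing R] (q : ℕ)
    (hN : IsUnit ((q ^ 2 + q + 1 : ℕ) : R))
    (δ : Fin 3 → Fin (q + 1) → ZMod (q ^ 2 + q + 1))
    (hinj : ∀ i, Function.Injective (δ i))
    (h0 : ∀ i, δ i 0 = 0)
    (hpds : ∀ i, IsPlanarDifferenceSet q (Set.range (δ i))) :
    Nonempty (barHomology R (SingerLattice q δ) 0 ≃ₗ[R] R) ∧
    Nonempty (barHomology R (SingerLattice q δ) 2 ≃ₗ[R] (Fin q → R)) ∧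
    (∀ j : ℕ, j ≠ 0 → j ≠ 2 → Subsingleton (barHomology R (SingerLattice q δ) j)) := by
  have H := IsPlanar.of_isPlanarDifferenceSet hinj h0 hpds
  have P := SingerLattice.isLatticePresentation (δ := δ)
  have hA : IsUnit (Nat.card (ZMod (q ^ 2 + q + 1)) : R) := by rwa [Nat.card_zmod]
  have vanishing (j) (h : IsZero (groupHomology (Rep.trivial R (SingerLattice q δ) R) j)) :
      Subsingleton (barHomology R (SingerLattice q δ) j) :=
    (barHomologyEquiv R _ j).toEquiv.subsingleton_congr.2 (ModuleCat.isZero_iff_subsingleton.1 h)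
  refine ⟨⟨barHomologyEquiv R _ 0 ≪≫ₗ (groupHomology.H0IsoOfIsTrivial _).toLinearEquiv⟩,
    ⟨barHomologyEquiv R _ 2 ≪≫ₗ groupHomologyTwoEquiv hA H P ≪≫ₗ kerSumCoeffEquiv R q⟩, ?_⟩
  rintro (_ | _ | _ | n) hj₀ hj₂
  · exact absurd rfl hj₀
  · exact vanishing 1 (isZero_groupHomology_trivial_one hA P)
  · exact absurd rfl hj₂
  · exact vanishing (n + 3) (isZero_groupHomology_trivial_add_three hA H P n)

/-- Let `q ≥ 2` be a prime power, `N = q² + q + 1`, and let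
`δ₁, δ₂, δ₃ : {0, …, q} → ZMod N` be injections with `δᵢ(0) = 0` whose images are planar
difference sets of order `q`, and let `Γ` be the panel-regular lattice presented by
`⟨σ₁, σ₂, σ₃ ∣ σᵢ^N = 1, σ₁^{δ₁(j)} σ₂^{δ₂(j)} σ₃^{δ₃(j)} = 1 for all j⟩`.
Then the rational group homology of `Γ` is:  `H₀(Γ; ℚ) ≅ ℚ`, `H₂(Γ; ℚ) ≅ ℚ^q`, and
`H_j(Γ; ℚ) = 0` for every `j ∉ {0, 2}`. -/
theorem statement7 (q : ℕ) (hq : IsPrimePow q)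
    (δ : Fin 3 → Fin (q + 1) → ZMod (q ^ 2 + q + 1))
    (hinj : ∀ i, Function.Injective (δ i))
    (h0 : ∀ i, δ i 0 = 0)
    (hpds : ∀ i, IsPlanarDifferenceSet q (Set.range (δ i))) :
    Nonempty (barHomology ℚ (SingerLattice q δ) 0 ≃ₗ[ℚ] ℚ) ∧
    Nonempty (barHomology ℚ (SingerLattice q δ) 2 ≃ₗ[ℚ] (Fin q → ℚ)) ∧
    (∀ j : ℕ, j ≠ 0 → j ≠ 2 → Subsingleton (barHomology ℚ (SingerLattice q δ) j)) :=
  statement7_general ℚ q (IsUnit.mk0 _ (Nat.cast_ne_zero.2 (Nat.succ_ne_zero _))) δ hinj h0 hpds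

end Stmt7
end

section
/- In the presented group Γ = ⟨a, b, c | a³ = b³ = c³ = 1, (ab)² = ba, (ac)² = ca, (c⁻¹b)² = bc⁻¹⟩, the subgroup generated by the three elements a⁻¹b⁻¹, bc⁻¹ and ca is isomorphic to the presented group Λ = ⟨σ₁, σ₂, σ₃ | σ₁⁷ = σ₂⁷ = σ₃⁷ = 1, σ₁σ₂σ₃ = 1, σ₁³σ₂³σ₃³ = 1⟩. -/
/-!
Each of the pairs `(a, b)`, `(a, c)`, `(c⁻¹, b)` of generators of `Γ` generates a quotient of the
Frobenius group of order 21, whose elements of order seven are powers of `ba`, `ca`, `bc⁻¹`. The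
relations of these three Frobenius groups imply those of `Λ`, so `σ₁ ↦ a⁻¹b⁻¹`, `σ₂ ↦ bc⁻¹`,
`σ₃ ↦ ca` defines a homomorphism `Λ → Γ` onto the given subgroup. For injectivity, conjugation by
`a` is modelled inside `Λ`: there is an automorphism `τ` of `Λ` with `τ³ = 1`, `τ σ₁ = σ₁⁴` and
`τ σ₃ = σ₃⁴`. In `Λ ⋊ Aut Λ` the elements `τ`, `σ₁⁻¹τ⁻¹`, `σ₃τ⁻¹` satisfy the relations of `a`, `b`,
`c`, and the resulting homomorphism `Γ → Λ ⋊ Aut Λ` composed with `Λ → Γ` is the inclusion of `Λ`.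
-/

namespace Stmt12

/-- The relators of the Köhler–Meixner–Wester presentation
`Γ = ⟨a, b, c ∣ a³ = b³ = c³ = 1, (ab)² = ba, (ac)² = ca, (c⁻¹b)² = bc⁻¹⟩`,
where the generators `a, b, c` correspond to `0, 1, 2 : Fin 3`. -/
def kmwRels : Set (FreeGroup (Fin 3)) :=
  { FreeGroup.of 0 ^ 3, FreeGroup.of 1 ^ 3, FreeGroup.of 2 ^ 3,
    (FreeGroup.of 0 * FreeGroup.of 1) ^ 2 * (FreeGroup.of 1 * FreeGroup.of 0)⁻¹,
    (FreeGroup.of 0 * FreeGroup.of 2) ^ 2 * (FreeGroup.of 2 * FreeGroup.of 0)⁻¹,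
    ((FreeGroup.of 2)⁻¹ * FreeGroup.of 1) ^ 2 * (FreeGroup.of 1 * (FreeGroup.of 2)⁻¹)⁻¹ }

/-- The Köhler–Meixner–Wester group
`Γ = ⟨a, b, c ∣ a³ = b³ = c³ = 1, (ab)² = ba, (ac)² = ca, (c⁻¹b)² = bc⁻¹⟩`. -/
def KMWGroup := PresentedGroup kmwRels

instance : Group KMWGroup := by unfold KMWGroup; infer_instance

/-- The generators `a`, `b`, `c` of the Köhler–Meixner–Wester group. -/
def a : KMWGroup := PresentedGroup.of 0
def b : KMWGroup := PresentedGroup.of 1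
def c : KMWGroup := PresentedGroup.of 2

/-- The relators of the presentation
`Λ = ⟨σ₁, σ₂, σ₃ ∣ σ₁⁷ = σ₂⁷ = σ₃⁷ = 1, σ₁σ₂σ₃ = 1, σ₁³σ₂³σ₃³ = 1⟩`,
where `σ₁, σ₂, σ₃` correspond to `0, 1, 2 : Fin 3`. -/
def lambdaRels : Set (FreeGroup (Fin 3)) :=
  { FreeGroup.of 0 ^ 7, FreeGroup.of 1 ^ 7, FreeGroup.of 2 ^ 7,
    FreeGroup.of 0 * FreeGroup.of 1 * FreeGroup.of 2,
    FreeGroup.of 0 ^ 3 * FreeGroup.of 1 ^ 3 * FreeGroup.of 2 ^ 3 }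

/-- The panel-regular `Ã₂`-lattice
`Λ = ⟨σ₁, σ₂, σ₃ ∣ σ₁⁷ = σ₂⁷ = σ₃⁷ = 1, σ₁σ₂σ₃ = 1, σ₁³σ₂³σ₃³ = 1⟩`. -/
def LambdaGroup := PresentedGroup lambdaRels

instance : Group LambdaGroup := by unfold LambdaGroup; infer_instance

section SemiconjByPow

variable {M : Type*} [Monoid M] {u x : M} {k : ℕ}

theorem semiconjBy_pow_of_semiconjBy_pow_self (h : SemiconjBy u (x ^ k) x) (n : ℕ) :
    SemiconjBy (u ^ n) (x ^ k ^ n) x := by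
  induction n with
  | zero => simp
  | succ n ih =>
    have hstep : SemiconjBy u (x ^ k ^ (n + 1)) (x ^ k ^ n) := by
      simpa only [← pow_mul, ← pow_succ'] using h.pow_right (k ^ n)
    rw [pow_succ u]
    exact ih.mul_left hstep

theorem mul_pow_eq_of_semiconjBy_pow (h : SemiconjBy u x (x ^ k)) (n : ℕ) :
    (x * u) ^ n = x ^ (∑ i ∈ Finset.range n, k ^ i) * u ^ n := by
  induction n with
  | zero => simp
  | succ n ih =>
    rw [pow_succ', ih, geom_sum_succ]
    generalize ∑ i ∈ Finset.range n, k ^ i = m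
    calc x * u * (x ^ m * u ^ n) = x * (u * x ^ m) * u ^ n := by simp only [mul_assoc]
      _ = x * ((x ^ k) ^ m * u) * u ^ n := by rw [(h.pow_right m).eq]
      _ = x ^ (k * m + 1) * u ^ (n + 1) := by simp only [pow_succ', pow_mul, mul_assoc]

end SemiconjByPow

section Frobenius

variable {G : Type*} [Group G] {t w x y : G}

/-- `t` and `w` satisfy the relations `t³ = w⁷ = 1`, `t w t⁻¹ = w⁴` of the Frobenius group of
order 21, the conjugation relation being written as `SemiconjBy t w (w ^ 4)`. -/
structure IsFrobeniusPair (t w : G) : Prop where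
  pow_three : t ^ 3 = 1
  pow_seven : w ^ 7 = 1
  semiconjBy : SemiconjBy t w (w ^ 4)

namespace IsFrobeniusPair

theorem inv_right (h : IsFrobeniusPair t w) : IsFrobeniusPair t w⁻¹ where
  pow_three := h.pow_three
  pow_seven := by rw [inv_pow, h.pow_seven, inv_one]
  semiconjBy := by simpa only [inv_pow] using h.semiconjBy.inv_right

theorem conj_eq (h : IsFrobeniusPair t w) : t * w * t⁻¹ = w ^ 4 :=
  mul_inv_eq_of_eq_mul h.semiconjBy.eq

theorem mul_inv_pow_three (h : IsFrobeniusPair t w) : (w * t⁻¹) ^ 3 = 1 := by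
  have hsq : SemiconjBy t (w ^ 2) w := by
    have hpow : (w ^ 4) ^ 2 = w := by rw [← pow_mul, pow_eq_pow_mod _ h.pow_seven, pow_one]
    simpa only [hpow] using h.semiconjBy.pow_right 2
  calc (w * t⁻¹) ^ 3 = w ^ 7 * (t ^ 3)⁻¹ := by
        rw [mul_pow_eq_of_semiconjBy_pow hsq.inv_symm_left, inv_pow]
        norm_num [Finset.sum_range_succ]
    _ = 1 := by rw [h.pow_seven, h.pow_three, one_mul, inv_one]

theorem mul_pow_four (h : IsFrobeniusPair x (y * x)) : (y * x) ^ 4 = x * y :=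
  mul_right_cancel <| h.semiconjBy.eq.symm.trans (mul_assoc x y x).symm

theorem mul_pow_three (h : IsFrobeniusPair x (y * x)) : (y * x) ^ 3 = (x * y)⁻¹ := by
  rw [eq_inv_iff_mul_eq_one, ← h.mul_pow_four, ← pow_add, h.pow_seven]

end IsFrobeniusPair

theorem isFrobeniusPair_mul_iff :
    IsFrobeniusPair x (y * x) ↔ x ^ 3 = 1 ∧ (x * y) ^ 2 = y * x := by
  refine ⟨fun h => ⟨h.pow_three, ?_⟩, fun ⟨hx, hxy⟩ => ?_⟩
  · rw [← h.mul_pow_four, ← pow_mul, pow_eq_pow_mod _ h.pow_seven, pow_one]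
  · have hconj : SemiconjBy x (y * x) (x * y) := (mul_assoc x y x).symm
    have hsq : SemiconjBy x ((y * x) ^ 2) (y * x) := hxy ▸ hconj.pow_right 2
    have hpow_eight : (y * x) ^ 8 = y * x := by
      simpa [hx, SemiconjBy] using semiconjBy_pow_of_semiconjBy_pow_self hsq 3
    refine ⟨hx, mul_eq_right.mp ((pow_succ (y * x) 7).symm.trans hpow_eight), ?_⟩
    simpa only [← pow_mul, hpow_eight] using hsq.pow_right 4

end Frobenius

section Triples

variable {G : Type*} [Group G] {r s t x y z : G}

/-- `r`, `s`, `t` satisfy the defining relations of `a`, `b`, `c` in `KMWGroup`. -/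
structure IsKMWTriple (r s t : G) : Prop where
  pow_three_left : r ^ 3 = 1
  pow_three_mid : s ^ 3 = 1
  pow_three_right : t ^ 3 = 1
  sq_mul_left : (r * s) ^ 2 = s * r
  sq_mul_right : (r * t) ^ 2 = t * r
  sq_inv_mul : (t⁻¹ * s) ^ 2 = s * t⁻¹

/-- `x`, `y`, `z` satisfy the defining relations of `σ₁`, `σ₂`, `σ₃` in `LambdaGroup`. -/
structure IsSingerTriple (x y z : G) : Prop where
  pow_seven_left : x ^ 7 = 1
  pow_seven_mid : y ^ 7 = 1
  pow_seven_right : z ^ 7 = 1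
  mul_eq_one : x * y * z = 1
  mul_pow_three_eq_one : x ^ 3 * y ^ 3 * z ^ 3 = 1

theorem isKMWTriple_iff_isFrobeniusPair :
    IsKMWTriple r s t ↔
      IsFrobeniusPair r (s * r) ∧ IsFrobeniusPair r (t * r) ∧ IsFrobeniusPair t⁻¹ (s * t⁻¹) := by
  simp only [isFrobeniusPair_mul_iff]
  refine ⟨fun h => ⟨⟨h.pow_three_left, h.sq_mul_left⟩, ⟨h.pow_three_left, h.sq_mul_right⟩,
    ⟨by rw [inv_pow, h.pow_three_right, inv_one], h.sq_inv_mul⟩⟩, fun ⟨hrs, hrt, hts⟩ => ?_⟩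
  have hs := (isFrobeniusPair_mul_iff.mpr hrs).mul_inv_pow_three
  have ht := (isFrobeniusPair_mul_iff.mpr hrt).mul_inv_pow_three
  rw [mul_inv_cancel_right] at hs ht
  exact ⟨hrs.1, hs, ht, hrs.2, hrt.2, hts.2⟩

theorem IsKMWTriple.isSingerTriple (h : IsKMWTriple r s t) :
    IsSingerTriple (r⁻¹ * s⁻¹) (s * t⁻¹) (t * r) := by
  obtain ⟨hrs, hrt, hts⟩ := isKMWTriple_iff_isFrobeniusPair.mp h
  rw [← mul_inv_rev]
  refine ⟨hrs.inv_right.pow_seven, hts.pow_seven, hrt.pow_seven, by group, ?_⟩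
  rw [inv_pow, hrs.mul_pow_three, hts.mul_pow_three, hrt.mul_pow_three]
  group

namespace IsSingerTriple

theorem mul_eq_inv (h : IsSingerTriple x y z) : z * x = y⁻¹ := by
  rw [eq_inv_iff_mul_eq_one, mul_assoc]
  exact mul_eq_one_comm.mp h.mul_eq_one

theorem pow_four_mul_pow_four (h : IsSingerTriple x y z) : x ^ 4 * z ^ 4 = y ^ 3 := by
  have hx : x ^ 4 = (x ^ 3)⁻¹ := by rw [eq_inv_iff_mul_eq_one, ← pow_add, h.pow_seven_left]
  have hz : z ^ 4 = (z ^ 3)⁻¹ := by rw [eq_inv_iff_mul_eq_one, ← pow_add, h.pow_seven_right]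
  rw [hx, hz, mul_inv_eq_iff_eq_mul, inv_eq_iff_mul_eq_one, ← mul_assoc, h.mul_pow_three_eq_one]

-- Conjugating `y ^ 4` by `z ^ 4` makes the product `x ^ 4 * z ^ 4 * y ^ 4 = y ^ 3 * y ^ 4`.
theorem pow_four (h : IsSingerTriple x y z) :
    IsSingerTriple (x ^ 4) (z ^ 4 * y ^ 4 * (z ^ 4)⁻¹) (z ^ 4) where
  pow_seven_left := by rw [pow_right_comm, h.pow_seven_left, one_pow]
  pow_seven_mid := by
    rw [conj_pow, pow_right_comm, h.pow_seven_mid, one_pow, mul_one, mul_inv_cancel]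
  pow_seven_right := by rw [pow_right_comm, h.pow_seven_right, one_pow]
  mul_eq_one := by
    rw [← mul_assoc, ← mul_assoc, h.pow_four_mul_pow_four, inv_mul_cancel_right, ← pow_add,
      h.pow_seven_mid]
  mul_pow_three_eq_one := by
    have hpow {g : G} (hg : g ^ 7 = 1) : (g ^ 4) ^ 3 = g ^ 5 := by
      rw [← pow_mul, pow_eq_pow_mod _ hg]
    rw [conj_pow, hpow h.pow_seven_left, hpow h.pow_seven_mid, hpow h.pow_seven_right]
    calc x ^ 5 * (z ^ 4 * y ^ 5 * (z ^ 4)⁻¹) * z ^ 5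
        = z⁻¹ * (z * x * (x ^ 4 * z ^ 4) * y ^ 5) * z := by group
      _ = z⁻¹ * y ^ 7 * z := by rw [h.mul_eq_inv, h.pow_four_mul_pow_four]; group
      _ = 1 := by rw [h.pow_seven_mid, mul_one, inv_mul_cancel]

theorem map {H : Type*} [Group H] (h : IsSingerTriple x y z) (f : G →* H) :
    IsSingerTriple (f x) (f y) (f z) := by
  constructor <;> simp only [← map_pow, ← map_mul, h.pow_seven_left, h.pow_seven_mid,
    h.pow_seven_right, h.mul_eq_one, h.mul_pow_three_eq_one, map_one]

theorem isKMWTriple (h : IsSingerTriple x y z) (hx : IsFrobeniusPair t x)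
    (hz : IsFrobeniusPair t z) : IsKMWTriple t (x⁻¹ * t⁻¹) (z * t⁻¹) := by
  have hy : y = x⁻¹ * z⁻¹ := by rw [← mul_inv_rev, h.mul_eq_inv, inv_inv]
  have hsq : (t * z⁻¹ * (x⁻¹ * t⁻¹)) ^ 2 = y :=
    calc (t * z⁻¹ * (x⁻¹ * t⁻¹)) ^ 2 = ((t * x * t⁻¹ * (t * z * t⁻¹))⁻¹) ^ 2 := by group
      _ = ((y ^ 3)⁻¹) ^ 2 := by
        rw [hx.conj_eq, hz.conj_eq, h.pow_four_mul_pow_four]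
      _ = y * (y ^ 7)⁻¹ := by group
      _ = y := by rw [h.pow_seven_mid, inv_one, mul_one]
  refine isKMWTriple_iff_isFrobeniusPair.mpr
    ⟨by simpa using hx.inv_right, by simpa using hz, isFrobeniusPair_mul_iff.mpr ⟨?_, ?_⟩⟩
  · rw [inv_pow, hz.mul_inv_pow_three, inv_one]
  · simpa [hy] using hsq

end IsSingerTriple

theorem isKMWTriple_iff_forall_kmwRels :
    IsKMWTriple r s t ↔ ∀ g ∈ kmwRels, FreeGroup.lift ![r, s, t] g = 1 := by
  simp only [kmwRels, Set.forall_mem_insert, Set.mem_singleton_iff, forall_eq, map_mul, map_pow,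
    map_inv, FreeGroup.lift_apply_of, Matrix.cons_val, mul_inv_eq_one]
  exact ⟨fun ⟨hr, hs, ht, hrs, hrt, hts⟩ => ⟨hr, hs, ht, hrs, hrt, hts⟩,
    fun ⟨hr, hs, ht, hrs, hrt, hts⟩ => ⟨hr, hs, ht, hrs, hrt, hts⟩⟩

theorem isSingerTriple_iff_forall_lambdaRels :
    IsSingerTriple x y z ↔ ∀ g ∈ lambdaRels, FreeGroup.lift ![x, y, z] g = 1 := by
  simp only [lambdaRels, Set.forall_mem_insert, Set.mem_singleton_iff, forall_eq, map_mul, map_pow,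
    FreeGroup.lift_apply_of, Matrix.cons_val]
  exact ⟨fun ⟨hx, hy, hz, hmul, hcubes⟩ => ⟨hx, hy, hz, hmul, hcubes⟩,
    fun ⟨hx, hy, hz, hmul, hcubes⟩ => ⟨hx, hy, hz, hmul, hcubes⟩⟩

end Triples

namespace KMWGroup

variable {G : Type*} [Group G] {r s t : G}

theorem isKMWTriple : IsKMWTriple a b c := by
  have hlift : FreeGroup.lift ![a, b, c] = PresentedGroup.mk kmwRels := by
    ext i
    fin_cases i <;> exact FreeGroup.lift_apply_of
  exact isKMWTriple_iff_forall_kmwRels.mpr fun g hg =>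
    (DFunLike.congr_fun hlift g).trans (PresentedGroup.one_of_mem hg)

/-- The homomorphism out of `KMWGroup` with `a ↦ r`, `b ↦ s`, `c ↦ t`. -/
def lift (h : IsKMWTriple r s t) : KMWGroup →* G :=
  PresentedGroup.toGroup (isKMWTriple_iff_forall_kmwRels.mp h)

@[simp]
theorem lift_a (h : IsKMWTriple r s t) : lift h a = r :=
  PresentedGroup.toGroup.of _

@[simp]
theorem lift_b (h : IsKMWTriple r s t) : lift h b = s :=
  PresentedGroup.toGroup.of _

@[simp]
theorem lift_c (h : IsKMWTriple r s t) : lift h c = t :=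
  PresentedGroup.toGroup.of _

end KMWGroup

namespace LambdaGroup

open scoped SemidirectProduct

variable {G : Type*} [Group G] {x y z : G}

/-- The generators of `LambdaGroup`; `σ 0`, `σ 1`, `σ 2` are `σ₁`, `σ₂`, `σ₃`. -/
def σ (i : Fin 3) : LambdaGroup := (PresentedGroup.of i : PresentedGroup lambdaRels)

theorem isSingerTriple_σ : IsSingerTriple (σ 0) (σ 1) (σ 2) := by
  have hlift : FreeGroup.lift ![σ 0, σ 1, σ 2] = PresentedGroup.mk lambdaRels := by
    ext i
    fin_cases i <;> exact FreeGroup.lift_apply_of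
  exact isSingerTriple_iff_forall_lambdaRels.mpr fun g hg =>
    (DFunLike.congr_fun hlift g).trans (PresentedGroup.one_of_mem hg)

theorem σ_one_eq : σ 1 = (σ 2 * σ 0)⁻¹ := by
  rw [isSingerTriple_σ.mul_eq_inv, inv_inv]

theorem hom_ext {f g : LambdaGroup →* G} (h₀ : f (σ 0) = g (σ 0)) (h₂ : f (σ 2) = g (σ 2)) :
    f = g := by
  refine PresentedGroup.ext (rels := lambdaRels) fun i => ?_
  change f (σ i) = g (σ i)
  fin_cases i
  · exact h₀
  · simp only [Fin.mk_one, σ_one_eq, map_inv, map_mul, h₀, h₂]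
  · exact h₂

/-- The homomorphism out of `LambdaGroup` with `σ 0 ↦ x`, `σ 1 ↦ y`, `σ 2 ↦ z`. -/
def lift (h : IsSingerTriple x y z) : LambdaGroup →* G :=
  PresentedGroup.toGroup (isSingerTriple_iff_forall_lambdaRels.mp h)

theorem lift_σ (h : IsSingerTriple x y z) (i : Fin 3) : lift h (σ i) = ![x, y, z] i :=
  PresentedGroup.toGroup.of _

theorem range_lift (h : IsSingerTriple x y z) :
    (lift h).range = Subgroup.closure {x, y, z} := by
  have hclosure : Subgroup.closure (Set.range σ) = ⊤ := PresentedGroup.closure_range_of lambdaRels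
  have hcomp : lift h ∘ σ = ![x, y, z] := funext (lift_σ h)
  rw [MonoidHom.range_eq_map, ← hclosure, MonoidHom.map_closure, ← Set.range_comp, hcomp]
  simp only [Matrix.range_cons, Matrix.range_empty, Set.union_empty, Set.singleton_union]

/-- The endomorphism of `LambdaGroup` with `σ 0 ↦ σ 0 ^ 4`, `σ 2 ↦ σ 2 ^ 4`, which models
conjugation by `a` in `KMWGroup`. -/
def twist : LambdaGroup →* LambdaGroup := lift isSingerTriple_σ.pow_four

@[simp]
theorem twist_σ_zero : twist (σ 0) = σ 0 ^ 4 := lift_σ _ 0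

@[simp]
theorem twist_σ_two : twist (σ 2) = σ 2 ^ 4 := lift_σ _ 2

theorem twist_comp_twist_comp_twist : twist.comp (twist.comp twist) = MonoidHom.id LambdaGroup := by
  have hpow {g : LambdaGroup} (hg : g ^ 7 = 1) : ((g ^ 4) ^ 4) ^ 4 = g := by
    rw [← pow_mul, ← pow_mul, pow_eq_pow_mod _ hg, pow_one]
  apply hom_ext
  · simpa using hpow isSingerTriple_σ.pow_seven_left
  · simpa using hpow isSingerTriple_σ.pow_seven_right

/-- `twist` as an automorphism, with inverse `twist ∘ twist`. -/
def twistAut : MulAut LambdaGroup :=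
  MonoidHom.toMulEquiv twist (twist.comp twist) twist_comp_twist_comp_twist
    twist_comp_twist_comp_twist

theorem twistAut_pow_three : twistAut ^ 3 = 1 :=
  MulEquiv.ext fun g => DFunLike.congr_fun twist_comp_twist_comp_twist g

/-- The semidirect product `Λ ⋊ Aut Λ` for the tautological action. -/
abbrev Holomorph : Type := LambdaGroup ⋊[MonoidHom.id (MulAut LambdaGroup)] MulAut LambdaGroup

theorem isFrobeniusPair_inr_inl {g : LambdaGroup} (hg : g ^ 7 = 1) (htwist : twist g = g ^ 4) :
    IsFrobeniusPair (SemidirectProduct.inr twistAut : Holomorph) (SemidirectProduct.inl g) where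
  pow_three := by rw [← map_pow, twistAut_pow_three, map_one]
  pow_seven := by rw [← map_pow, hg, map_one]
  semiconjBy := by
    rw [← map_pow, ← htwist]
    refine mul_inv_eq_iff_eq_mul.mp ?_
    rw [← map_inv]
    exact (SemidirectProduct.inl_aut (φ := MonoidHom.id (MulAut LambdaGroup)) twistAut g).symm

theorem isKMWTriple_holomorph :
    IsKMWTriple (SemidirectProduct.inr twistAut : Holomorph)
      ((SemidirectProduct.inl (σ 0))⁻¹ * (SemidirectProduct.inr twistAut)⁻¹)
      (SemidirectProduct.inl (σ 2) * (SemidirectProduct.inr twistAut)⁻¹) :=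
  (isSingerTriple_σ.map SemidirectProduct.inl).isKMWTriple
    (isFrobeniusPair_inr_inl isSingerTriple_σ.pow_seven_left twist_σ_zero)
    (isFrobeniusPair_inr_inl isSingerTriple_σ.pow_seven_right twist_σ_two)

/-- The homomorphism `Λ → Γ` with `σ₁ ↦ a⁻¹b⁻¹`, `σ₂ ↦ bc⁻¹`, `σ₃ ↦ ca`. -/
def toKMWGroup : LambdaGroup →* KMWGroup := lift KMWGroup.isKMWTriple.isSingerTriple

theorem range_toKMWGroup :
    toKMWGroup.range = Subgroup.closure {a⁻¹ * b⁻¹, b * c⁻¹, c * a} :=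
  range_lift _

theorem lift_holomorph_comp_toKMWGroup :
    (KMWGroup.lift isKMWTriple_holomorph).comp toKMWGroup = SemidirectProduct.inl := by
  apply hom_ext <;> simp [toKMWGroup, lift_σ]

theorem toKMWGroup_injective : Function.Injective toKMWGroup := by
  have hcomp : Function.Injective ((KMWGroup.lift isKMWTriple_holomorph).comp toKMWGroup) := by
    rw [lift_holomorph_comp_toKMWGroup]
    exact SemidirectProduct.inl_injective
  exact Function.Injective.of_comp hcomp

end LambdaGroup

/-- In the Köhler–Meixner–Wester group
`Γ = ⟨a, b, c ∣ a³ = b³ = c³ = 1, (ab)² = ba, (ac)² = ca, (c⁻¹b)² = bc⁻¹⟩`, the subgroup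
generated by the three elements `a⁻¹b⁻¹`, `bc⁻¹` and `ca` is isomorphic to the presented group
`Λ = ⟨σ₁, σ₂, σ₃ ∣ σ₁⁷ = σ₂⁷ = σ₃⁷ = 1, σ₁σ₂σ₃ = 1, σ₁³σ₂³σ₃³ = 1⟩`. -/
theorem statement12 :
    Nonempty
      (↥(Subgroup.closure ({a⁻¹ * b⁻¹, b * c⁻¹, c * a} : Set KMWGroup)) ≃* LambdaGroup) := by
  rw [← LambdaGroup.range_toKMWGroup]
  exact ⟨(MonoidHom.ofInjective LambdaGroup.toKMWGroup_injective).symm⟩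

end Stmt12
end
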